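/- arXiv:1208.0446 — 8 statements merged into one kernel-verified Lean document; each statement's English description precedes it below -/
import Mathlib

section
/- Let f be the Shapley operator of a zero-sum two-player stochastic game with finite state space {1,…,n}, finite action sets and stochastic transition vectors. Then for all η, v ∈ ℝⁿ there exists T ∈ ℝ such that for every t ≥ T one has f(tη + v) = t·f̂(η) + f_η(v), where f̂ is the recession function of f and f_η is the tangent of f at infinity around the slope η. -/
open Filter Topology

/-!
As `t → ∞`, two functions that are eventually affine in `t` compare like their pairs
(slope, intercept) in the lexicographic order. A maximum of finitely many of them is therefore
eventually equal to the one with the largest slope and, among those, the largest intercept; the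
minimum is dual. The one-step payoff at `t • η + v` is affine in `t`, with slope the linear part
evaluated at `η`, so the min-max is eventually affine: its slope is the recession function, and its
intercept is the min-max over the actions that are optimal for the slope.
-/

/-- The germ at `+∞` of the real function `g` is that of the affine function
`t ↦ t * m + c`, with slope `m` and intercept `c`. -/
def EventuallyAffine (g : ℝ → ℝ) (m c : ℝ) : Prop :=
  ∀ᶠ t in atTop, g t = t * m + c

namespace EventuallyAffine

theorem eventually_le {g g' : ℝ → ℝ} {m c m' c' : ℝ} (hg : EventuallyAffine g m c)
    (hg' : EventuallyAffine g' m' c') (hle : toLex (m, c) ≤ toLex (m', c')) :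
    g ≤ᶠ[atTop] g' := by
  suffices h : ∀ᶠ t in atTop, t * m + c ≤ t * m' + c' by
    filter_upwards [hg, hg', h] with t hgt hgt' ht
    rwa [hgt, hgt']
  rcases Prod.Lex.toLex_le_toLex.1 hle with hslope | ⟨rfl, hintercept⟩
  · have hgap : Tendsto (fun t => t * (m' - m)) atTop atTop :=
      tendsto_id.atTop_mul_const (sub_pos.2 hslope)
    filter_upwards [hgap.eventually_ge_atTop (c - c')] with t ht
    linarith
  · exact .of_forall fun t => by gcongr

theorem neg {g : ℝ → ℝ} {m c : ℝ} (hg : EventuallyAffine g m c) :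
    EventuallyAffine (fun t => -g t) (-m) (-c) := by
  filter_upwards [hg] with t ht
  rw [ht]
  ring

end EventuallyAffine

theorem exists_lex_max_eq_iSup {ι : Type*} [Finite ι] [Nonempty ι] (m c : ι → ℝ) :
    ∃ i₀, m i₀ = ⨆ j, m j ∧ c i₀ = ⨆ i : {i // m i = ⨆ j, m j}, c i ∧
      ∀ i, toLex (m i, c i) ≤ toLex (m i₀, c i₀) := by
  have : Nonempty {i // m i = ⨆ j, m j} := nonempty_subtype.2 exists_eq_ciSup_of_finite
  obtain ⟨⟨i₀, hm⟩, hc⟩ := exists_eq_ciSup_of_finite (f := fun i : {i // m i = ⨆ j, m j} => c i)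
  refine ⟨i₀, hm, hc, fun i => Prod.Lex.toLex_le_toLex.2 ?_⟩
  have hle : m i ≤ m i₀ := hm ▸ le_ciSup (Set.finite_range m).bddAbove i
  refine hle.lt_or_eq.imp_right fun heq => ⟨heq, hc ▸ ?_⟩
  exact le_ciSup (f := fun i : {i // m i = ⨆ j, m j} => c i)
    (Set.finite_range _).bddAbove ⟨i, heq.trans hm⟩

theorem real_iSup_neg {ι : Sort*} (x : ι → ℝ) : ⨆ i, -x i = -⨅ i, x i := by
  simpa using (Real.mul_iInf_of_nonpos (r := -1) (by norm_num) x).symm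

namespace EventuallyAffine

variable {ι : Type*} [Finite ι] [Nonempty ι] {g : ι → ℝ → ℝ} {m c : ι → ℝ}

theorem iSup (hg : ∀ i, EventuallyAffine (g i) (m i) (c i)) :
    EventuallyAffine (fun t => ⨆ i, g i t) (⨆ i, m i) (⨆ i : {i // m i = ⨆ j, m j}, c i) := by
  obtain ⟨i₀, hm, hc, hmax⟩ := exists_lex_max_eq_iSup m c
  have hdom : ∀ᶠ t in atTop, ∀ i, g i t ≤ g i₀ t :=
    eventually_all.2 fun i => (hg i).eventually_le (hg i₀) (hmax i)
  filter_upwards [hdom, hg i₀] with t hle hi₀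
  rw [← hc, ← hm, ← hi₀]
  exact le_antisymm (ciSup_le hle) (le_ciSup (Set.finite_range fun i => g i t).bddAbove i₀)

theorem iInf (hg : ∀ i, EventuallyAffine (g i) (m i) (c i)) :
    EventuallyAffine (fun t => ⨅ i, g i t) (⨅ i, m i) (⨅ i : {i // m i = ⨅ j, m j}, c i) := by
  have hargmin : (fun i => -m i = ⨆ j, -m j) = fun i => m i = ⨅ j, m j := by
    simp only [real_iSup_neg, neg_inj]
  have hneg := (iSup fun i => (hg i).neg).neg
  rw [hargmin] at hneg
  simpa only [real_iSup_neg, neg_neg] using hneg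

end EventuallyAffine

theorem eventuallyAffine_linear_add_const {E : Type*} [AddCommGroup E] [Module ℝ E]
    (L : Module.Dual ℝ E) (ρ : ℝ) (η v : E) :
    EventuallyAffine (fun t => L (t • η + v) + ρ) (L η) (L v + ρ) :=
  .of_forall fun t => by simp only [map_add, map_smul, smul_eq_mul, add_assoc]

/-- `L i a b` stands for the expectation `v ↦ ∑ j, P i a b j * v j`. -/
theorem shapley_eventually_affine_general {E σ : Type*} [AddCommGroup E] [Module ℝ E] [Finite σ]
    {A : σ → Type*} {B : ∀ i, A i → Type*} [∀ i, Finite (A i)] [∀ i, Nonempty (A i)]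
    [∀ i a, Finite (B i a)] [∀ i a, Nonempty (B i a)]
    (L : ∀ i a, B i a → Module.Dual ℝ E) (r : ∀ i a, B i a → ℝ)
    {f fhat : E → σ → ℝ} {ftan : E → E → σ → ℝ}
    (hf : ∀ v i, f v i = ⨅ a, ⨆ b, (L i a b v + r i a b))
    (hfhat : ∀ η i, fhat η i = ⨅ a, ⨆ b, L i a b η)
    (hftan : ∀ η v i, ftan η v i =
      ⨅ a : {a // ⨆ b, L i a b η = fhat η i},
      ⨆ b : {b // L i a b η = ⨆ b', L i a b' η}, (L i a b v + r i a b))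
    (η v : E) :
    ∀ᶠ t : ℝ in atTop, f (t • η + v) = t • fhat η + ftan η v := by
  have hcoord (i : σ) :
      EventuallyAffine (fun t => f (t • η + v) i) (fhat η i) (ftan η v i) := by
    simp only [hf]
    rw [hftan, hfhat]
    exact .iInf fun a => .iSup fun b => eventuallyAffine_linear_add_const (L i a b) (r i a b) η v
  filter_upwards [eventually_all.2 hcoord] with t ht using funext ht

/-- Let `f` be the Shapley operator of a zero-sum two-player stochastic
game with finite state space `{1,…,n}`, finite nonempty action sets `A i`, `B i`,
probability transition vectors `P i a b` and rewards `r i a b`.  Then for all `η, v ∈ ℝⁿ`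
there exists `T ∈ ℝ` such that for every `t ≥ T`,
`f (t·η + v) = t·f̂(η) + f_η(v)`, where `f̂` is the recession function of `f` and `f_η` is
the tangent of `f` at infinity around the slope `η`. -/
theorem shapley_eventually_affine
    (n : ℕ) (A B : Fin n → Type) [∀ i, Fintype (A i)] [∀ i, Nonempty (A i)]
    [∀ i, Fintype (B i)] [∀ i, Nonempty (B i)]
    (P : ∀ i : Fin n, A i → B i → Fin n → ℝ) (r : ∀ i : Fin n, A i → B i → ℝ)
    (hP0 : ∀ i a b j, 0 ≤ P i a b j) (hP1 : ∀ i a b, ∑ j, P i a b j = 1)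
    (f fhat : (Fin n → ℝ) → (Fin n → ℝ))
    (ftan : (Fin n → ℝ) → (Fin n → ℝ) → (Fin n → ℝ))
    -- the Shapley operator
    (hf : ∀ v i, f v i = ⨅ a : A i, ⨆ b : B i, (∑ j, P i a b j * v j + r i a b))
    -- its recession function
    (hfhat : ∀ η i, fhat η i = ⨅ a : A i, ⨆ b : B i, ∑ j, P i a b j * η j)
    -- its tangent at infinity around the slope η, with actions restricted to the
    -- argmin set Â_i(η) and argmax sets B̂_i(a,η)
    (hftan : ∀ η v i, ftan η v i =
      ⨅ a : {a : A i // (⨆ b : B i, ∑ j, P i a b j * η j) = fhat η i},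
      ⨆ b : {b : B i // (∑ j, P i a.1 b j * η j) = ⨆ b' : B i, ∑ j, P i a.1 b' j * η j},
      (∑ j, P i a.1 b.1 j * v j + r i a.1 b.1)) :
    ∀ η v : Fin n → ℝ, ∃ T : ℝ, ∀ t ≥ T,
      f (fun j => t * η j + v j) = fun i => t * fhat η i + ftan η v i := fun η v =>
  eventually_atTop.1 (shapley_eventually_affine_general
    (fun i a b => dotProductEquiv ℝ (Fin n) (P i a b)) r hf hfhat hftan η v)
end

section
/- Let f be the Shapley operator of a zero-sum two-player stochastic game with finite state space {1,…,n} and finite action sets. For η, v ∈ ℝⁿ, the half-line t ↦ tη + v is invariant under f, i.e. f(tη + v) = (t+1)η + v for all sufficiently large t, if and only if η = f̂(η) and η + v = f_η(v), where f̂ is the recession function of f and f_η is the tangent of f at infinity around the slope η. -/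
open Filter Topology

/-!
For large `t`, affine functions `t ↦ t c + d` are ordered lexicographically by `(c, d)`. The maximum
of finitely many of them is therefore eventually affine: its slope is the maximal `c`, and its
constant term is the maximal `d` among the maximizers of `c`; dually for minima. Applied first to
the inner maximum and then to the outer minimum, this gives `f (t η + v) = t f̂(η) + f_η(v)` for
large `t`, which is to be compared with the half-line `t η + (η + v)`.
-/

theorem eventually_mul_add_le_mul_add {𝕜 : Type*} [Field 𝕜] [LinearOrder 𝕜] [IsStrictOrderedRing 𝕜]
    {c d c' d' : 𝕜} (h : c < c' ∨ c = c' ∧ d ≤ d') :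
    ∀ᶠ t : 𝕜 in atTop, t * c + d ≤ t * c' + d' := by
  rcases h with hlt | ⟨rfl, hle⟩
  · have slope_gap : Tendsto (fun t : 𝕜 => t * (c' - c)) atTop atTop :=
      tendsto_id.atTop_mul_const (sub_pos.2 hlt)
    filter_upwards [slope_gap.eventually_ge_atTop (d - d')] with t ht
    linarith
  · exact .of_forall fun t => add_le_add_right hle (t * c)

theorem eventually_smul_add_eq_smul_add_iff {R E : Type*} [Ring R] [LinearOrder R]
    [IsStrictOrderedRing R] [AddCommGroup E] [Module R E] {p q p' q' : E} :
    (∀ᶠ t : R in atTop, t • p + q = t • p' + q') ↔ p = p' ∧ q = q' := by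
  refine ⟨fun h => ?_, fun ⟨hp, hq⟩ => by simp [hp, hq]⟩
  obtain ⟨T, hT⟩ := eventually_atTop.1 h
  have at_T : T • p + q = T • p' + q' := hT T le_rfl
  have at_T_add_one : p + (T • p + q) = p' + (T • p' + q') := by
    simpa only [add_smul, one_smul, add_comm, add_left_comm] using hT (T + 1) (by simp)
  have hp : p = p' := add_right_cancel (at_T ▸ at_T_add_one)
  exact ⟨hp, add_left_cancel (hp ▸ at_T)⟩

section Extrema

variable {α : Type*}

/-- The set of maximizers of a real function, stated through `⨆` and hence meaningful only for
functions bounded above. -/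
def argmaxSet (c : α → ℝ) : Set α := {a | c a = ⨆ a', c a'}

/-- The set of minimizers of a real function, stated through `⨅` and hence meaningful only for
functions bounded below. -/
def argminSet (c : α → ℝ) : Set α := {a | c a = ⨅ a', c a'}

theorem neg_iSup_neg (c : α → ℝ) : -⨆ a, -c a = ⨅ a, c a :=
  calc -⨆ a, -c a
      = -sSup (-Set.range c) := by rw [Set.neg_range]; rfl
    _ = ⨅ a, c a := by rw [Real.sSup_neg, neg_neg]; rfl

theorem argmaxSet_neg (c : α → ℝ) : argmaxSet (fun a => -c a) = argminSet c := by
  ext a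
  simp only [argmaxSet, argminSet, Set.mem_ofPred_eq, ← neg_iSup_neg c, neg_eq_iff_eq_neg]

variable [Finite α] [Nonempty α]

theorem argmaxSet_nonempty (c : α → ℝ) : (argmaxSet c).Nonempty :=
  exists_eq_ciSup_of_finite

theorem eventually_iSup_mul_add (c d : α → ℝ) :
    ∀ᶠ t : ℝ in atTop, ⨆ a, (t * c a + d a) = t * (⨆ a, c a) + ⨆ a : argmaxSet c, d a := by
  have := (argmaxSet_nonempty c).to_subtype
  obtain ⟨⟨a₀, c_a₀⟩, d_a₀⟩ := exists_eq_ciSup_of_finite (f := fun a : argmaxSet c => d a)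
  have le_lexMax (a : α) :
      c a < ⨆ a, c a ∨ c a = ⨆ a, c a ∧ d a ≤ ⨆ a : argmaxSet c, d a :=
    (le_ciSup (Finite.bddAbove_range c) a).lt_or_eq.imp_right fun ha =>
      ⟨ha, le_ciSup (f := fun a : argmaxSet c => d a) (Finite.bddAbove_range _) ⟨a, ha⟩⟩
  filter_upwards [eventually_all.2 fun a => eventually_mul_add_le_mul_add (le_lexMax a)] with t ht
  refine le_antisymm (ciSup_le ht) ?_
  calc t * (⨆ a, c a) + ⨆ a : argmaxSet c, d a
      = t * c a₀ + d a₀ := by rw [← d_a₀, c_a₀]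
    _ ≤ ⨆ a, (t * c a + d a) :=
      le_ciSup (f := fun a => t * c a + d a) (Finite.bddAbove_range _) a₀

theorem eventually_iInf_mul_add (c d : α → ℝ) :
    ∀ᶠ t : ℝ in atTop, ⨅ a, (t * c a + d a) = t * (⨅ a, c a) + ⨅ a : argminSet c, d a := by
  filter_upwards [eventually_iSup_mul_add (fun a => -c a) (fun a => -d a)] with t ht
  calc ⨅ a, (t * c a + d a)
      = -⨆ a, (t * -c a + -d a) := by simp only [← neg_iSup_neg, neg_add, mul_neg]
    _ = -(t * (⨆ a, -c a) + ⨆ a : argmaxSet fun a => -c a, -d a) := by rw [ht]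
    _ = t * (⨅ a, c a) + ⨅ a : argminSet c, d a := by
      rw [neg_add, ← mul_neg, argmaxSet_neg, neg_iSup_neg, neg_iSup_neg]

theorem eventually_iInf_iSup_mul_add {β : α → Type*} [∀ a, Finite (β a)] [∀ a, Nonempty (β a)]
    (c d : ∀ a, β a → ℝ) :
    ∀ᶠ t : ℝ in atTop, ⨅ a, ⨆ b, (t * c a b + d a b) =
      t * (⨅ a, ⨆ b, c a b) +
        ⨅ a : argminSet fun a => ⨆ b, c a b, ⨆ b : argmaxSet (c a), d a b := by
  filter_upwards [eventually_all.2 fun a => eventually_iSup_mul_add (c a) (d a),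
    eventually_iInf_mul_add (fun a => ⨆ b, c a b) fun a => ⨆ b : argmaxSet (c a), d a b]
    with t hmax hmin
  simp only [hmax, hmin]

end Extrema

section Shapley

variable {ι : Type*} [Fintype ι] {A : ι → Type*} {B : ∀ i, A i → Type*}
  (P : ∀ i a, B i a → ι → ℝ) (r : ∀ i a, B i a → ℝ)

/-- The Shapley operator with transition vectors `P i a b` and rewards `r i a b`. The vectors
`P i a b` are arbitrary, and the actions of the maximizer may depend on that of the minimizer. -/
noncomputable def shapleyOperator (v : ι → ℝ) (i : ι) : ℝ :=
  ⨅ a, ⨆ b, (P i a b ⬝ᵥ v + r i a b)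

/-- The recession function `f̂` of the Shapley operator `f`. -/
noncomputable def shapleyRecession (η : ι → ℝ) (i : ι) : ℝ :=
  ⨅ a, ⨆ b, P i a b ⬝ᵥ η

/-- The tangent `f_η` at infinity of the Shapley operator `f` around the slope `η`: the players are
restricted to the actions that are optimal for the recession function at `η`. -/
noncomputable def shapleyTangent (η v : ι → ℝ) (i : ι) : ℝ :=
  ⨅ a : argminSet fun a => ⨆ b, P i a b ⬝ᵥ η, ⨆ b : argmaxSet fun b => P i a b ⬝ᵥ η,
    (P i a b ⬝ᵥ v + r i a b)

variable [∀ i, Finite (A i)] [∀ i, Nonempty (A i)]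
  [∀ i a, Finite (B i a)] [∀ i a, Nonempty (B i a)]

theorem eventually_shapleyOperator_smul_add (η v : ι → ℝ) :
    ∀ᶠ t : ℝ in atTop, shapleyOperator P r (t • η + v) =
      t • shapleyRecession P η + shapleyTangent P r η v := by
  have coordinatewise := eventually_all.2 fun i => eventually_iInf_iSup_mul_add
    (fun a b => P i a b ⬝ᵥ η) fun a b => P i a b ⬝ᵥ v + r i a b
  filter_upwards [coordinatewise] with t ht
  ext i
  simp only [shapleyOperator, dotProduct_add, dotProduct_smul, smul_eq_mul, add_assoc]
  exact ht i

theorem invariant_halfLine_iff_system_general (η v : ι → ℝ) :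
    (∃ T : ℝ, ∀ t ≥ T, shapleyOperator P r (t • η + v) = (t + 1) • η + v) ↔
      shapleyRecession P η = η ∧ shapleyTangent P r η v = η + v := by
  rw [← eventually_atTop, ← eventually_smul_add_eq_smul_add_iff (R := ℝ)]
  refine eventually_congr ?_
  filter_upwards [eventually_shapleyOperator_smul_add P r η v] with t ht
  rw [ht, add_smul, one_smul, add_assoc]

end Shapley

/-- Let `f` be the Shapley operator of a zero-sum two-player stochastic
game with finite state space `{1,…,n}` and finite nonempty action sets.  For `η, v ∈ ℝⁿ`,
the half-line `t ↦ tη + v` is invariant under `f` (i.e. `f(tη + v) = (t+1)η + v` for all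
sufficiently large `t`) if and only if `η = f̂(η)` and `η + v = f_η(v)`, where `f̂` is the
recession function of `f` and `f_η` is the tangent of `f` at infinity around the slope `η`. -/
theorem invariant_halfLine_iff_system
    (n : ℕ) (A B : Fin n → Type) [∀ i, Fintype (A i)] [∀ i, Nonempty (A i)]
    [∀ i, Fintype (B i)] [∀ i, Nonempty (B i)]
    (P : ∀ i : Fin n, A i → B i → Fin n → ℝ) (r : ∀ i : Fin n, A i → B i → ℝ)
    (hP0 : ∀ i a b j, 0 ≤ P i a b j) (hP1 : ∀ i a b, ∑ j, P i a b j = 1)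
    (f fhat : (Fin n → ℝ) → (Fin n → ℝ))
    (ftan : (Fin n → ℝ) → (Fin n → ℝ) → (Fin n → ℝ))
    -- the Shapley operator
    (hf : ∀ v i, f v i = ⨅ a : A i, ⨆ b : B i, (∑ j, P i a b j * v j + r i a b))
    -- its recession function
    (hfhat : ∀ η i, fhat η i = ⨅ a : A i, ⨆ b : B i, ∑ j, P i a b j * η j)
    -- its tangent at infinity around the slope η, with actions restricted to the
    -- argmin set Â_i(η) and argmax sets B̂_i(a,η)
    (hftan : ∀ η v i, ftan η v i =
      ⨅ a : {a : A i // (⨆ b : B i, ∑ j, P i a b j * η j) = fhat η i},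
      ⨆ b : {b : B i // (∑ j, P i a.1 b j * η j) = ⨆ b' : B i, ∑ j, P i a.1 b' j * η j},
      (∑ j, P i a.1 b.1 j * v j + r i a.1 b.1))
    (η v : Fin n → ℝ) :
    (∃ T : ℝ, ∀ t ≥ T,
        f (fun j => t * η j + v j) = fun i => (t + 1) * η i + v i) ↔
      (fhat η = η ∧ ftan η v = fun i => η i + v i) := by
  obtain rfl : f = shapleyOperator P r := funext fun v => funext (hf v)
  obtain rfl : fhat = shapleyRecession P := funext fun η => funext (hfhat η)
  obtain rfl : ftan = shapleyTangent P r := funext fun η => funext fun v => funext (hftan η v)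
  exact invariant_halfLine_iff_system_general P r η v
end

section
/- Let f : ℝⁿ → ℝⁿ be nonexpansive in the sup-norm and suppose there exist η, v ∈ ℝⁿ and t₀ ∈ ℝ such that f(tη + v) = (t+1)η + v for all t ≥ t₀. Then for every y ∈ ℝⁿ the limit lim_{k→∞} f^k(y)/k exists and equals η, where f^k denotes the k-th iterate of f; in other words, the cycle time χ(f) exists and equals the slope of any invariant half-line of f. -/
open Filter Topology

/-!
Along an invariant half-line `t ↦ tη + v` the map acts as translation by `η`, so an orbit starting
far enough on it is `k ↦ x + kη`, which grows at the rate `η`. Nonexpansiveness keeps every other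
orbit at bounded distance from this one, and a bounded error disappears after division by `k`.
-/

/-- The cycle time of `f` exists and equals `χ`: every orbit grows linearly at the rate `χ`. -/
def HasCycleTime {E : Type*} [AddCommGroup E] [Module ℝ E] [TopologicalSpace E]
    (f : E → E) (χ : E) : Prop :=
  ∀ y : E, Tendsto (fun k : ℕ => (k : ℝ)⁻¹ • f^[k] y) atTop (𝓝 χ)

/-- The half-line `t ↦ tη + v` of slope `η` is invariant under `f`. The condition
bears only on large `t`. -/
def IsInvariantHalfLine {E : Type*} [AddCommGroup E] [Module ℝ E] (f : E → E) (η v : E) : Prop :=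
  ∀ᶠ t : ℝ in atTop, f (t • η + v) = (t + 1) • η + v

theorem dist_iterate_le_dist {X : Type*} [PseudoMetricSpace X] {f : X → X}
    (hf : LipschitzWith 1 f) (k : ℕ) (x y : X) : dist (f^[k] x) (f^[k] y) ≤ dist x y := by
  simpa only [one_pow, NNReal.coe_one, one_mul] using (hf.iterate k).dist_le_mul x y

theorem iterate_eq_of_forall_ge_apply_eq_add_one {R X : Type*} [AddMonoidWithOne R]
    [PartialOrder R] [AddLeftMono R] [ZeroLEOneClass R] {f : X → X} {w : R → X} {t₀ : R}
    (h : ∀ t ≥ t₀, f (w t) = w (t + 1)) (k : ℕ) : f^[k] (w t₀) = w (t₀ + k) := by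
  induction k with
  | zero => simp only [Function.iterate_zero, id_eq, Nat.cast_zero, add_zero]
  | succ k ih =>
    rw [Function.iterate_succ_apply', ih, h _ (le_add_of_nonneg_right (Nat.cast_nonneg' k)),
      Nat.cast_succ, add_assoc]

theorem IsInvariantHalfLine.exists_iterate_eq_add_smul {E : Type*} [AddCommGroup E] [Module ℝ E]
    {f : E → E} {η v : E} (h : IsInvariantHalfLine f η v) :
    ∃ x : E, ∀ k : ℕ, f^[k] x = x + (k : ℝ) • η := by
  obtain ⟨t₀, ht₀⟩ := eventually_atTop.mp h
  refine ⟨t₀ • η + v, fun k => ?_⟩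
  calc f^[k] (t₀ • η + v) = (t₀ + k) • η + v :=
        iterate_eq_of_forall_ge_apply_eq_add_one (w := fun t : ℝ => t • η + v) ht₀ k
    _ = t₀ • η + v + (k : ℝ) • η := by rw [add_smul, add_right_comm]

theorem tendsto_inv_smul_add_smul {E : Type*} [AddCommGroup E] [Module ℝ E] [TopologicalSpace E]
    [ContinuousAdd E] [ContinuousSMul ℝ E] (x η : E) :
    Tendsto (fun k : ℕ => (k : ℝ)⁻¹ • (x + (k : ℝ) • η)) atTop (𝓝 η) := by
  have hx : Tendsto (fun k : ℕ => (k : ℝ)⁻¹ • x + η) atTop (𝓝 η) := by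
    simpa only [zero_smul, zero_add] using
      (tendsto_inv_atTop_nhds_zero_nat (𝕜 := ℝ)).smul_const x |>.add_const η
  refine hx.congr' ?_
  filter_upwards [eventually_ne_atTop 0] with k hk
  rw [smul_add, inv_smul_smul₀ (Nat.cast_ne_zero.mpr hk)]

theorem tendsto_smul_of_isBoundedUnder_dist {ι 𝕜 E : Type*} [NormedField 𝕜]
    [SeminormedAddCommGroup E] [NormedSpace 𝕜 E] {l : Filter ι} {a : ι → 𝕜} {u w : ι → E} {χ : E}
    (ha : Tendsto a l (𝓝 0)) (huw : IsBoundedUnder (· ≤ ·) l fun i => dist (u i) (w i))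
    (hw : Tendsto (fun i => a i • w i) l (𝓝 χ)) : Tendsto (fun i => a i • u i) l (𝓝 χ) := by
  have hdiff : Tendsto (fun i => a i • (u i - w i)) l (𝓝 0) :=
    ha.zero_smul_isBoundedUnder_le (by simpa only [dist_eq_norm, Function.comp_def] using huw)
  simpa only [← smul_add, sub_add_cancel, zero_add] using hdiff.add hw

section Nonexpansive

variable {E : Type*} [SeminormedAddCommGroup E] [NormedSpace ℝ E] {f : E → E}

theorem hasCycleTime_of_tendsto_orbit (hf : LipschitzWith 1 f) {x χ : E}
    (hx : Tendsto (fun k : ℕ => (k : ℝ)⁻¹ • f^[k] x) atTop (𝓝 χ)) : HasCycleTime f χ := fun y =>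
  tendsto_smul_of_isBoundedUnder_dist tendsto_inv_atTop_nhds_zero_nat
    (isBoundedUnder_of ⟨dist y x, fun k => dist_iterate_le_dist hf k y x⟩) hx

theorem cycleTime_eq_slope_of_invariant_halfLine_general (hf : LipschitzWith 1 f) {η v : E}
    (hline : IsInvariantHalfLine f η v) : HasCycleTime f η := by
  obtain ⟨x, hx⟩ := hline.exists_iterate_eq_add_smul
  refine hasCycleTime_of_tendsto_orbit hf (x := x) ?_
  simpa only [hx] using tendsto_inv_smul_add_smul x η

end Nonexpansive

/-- Let `f : ℝⁿ → ℝⁿ` be nonexpansive in the sup-norm (the distance on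
`Fin n → ℝ` is the sup-distance) and suppose there exist `η, v ∈ ℝⁿ` and `t₀ ∈ ℝ` such
that `f(tη + v) = (t+1)η + v` for all `t ≥ t₀`.  Then for every `y ∈ ℝⁿ` the limit
`lim_{k→∞} f^k(y)/k` exists and equals `η`: the cycle time `χ(f)` exists and equals the
slope of the invariant half-line. -/
theorem cycleTime_eq_slope_of_invariant_halfLine
    (n : ℕ) (f : (Fin n → ℝ) → (Fin n → ℝ))
    (hne : ∀ x y : Fin n → ℝ, dist (f x) (f y) ≤ dist x y)
    (η v : Fin n → ℝ) (t₀ : ℝ)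
    (hinv : ∀ t ≥ t₀, f (fun i => t * η i + v i) = fun i => (t + 1) * η i + v i) :
    ∀ y : Fin n → ℝ,
      Tendsto (fun k : ℕ => fun i => f^[k] y i / k) atTop (𝓝 η) := by
  simp only [div_eq_inv_mul]
  exact cycleTime_eq_slope_of_invariant_halfLine_general (.mk_one hne)
    (eventually_atTop.mpr ⟨t₀, hinv⟩)
end

section
/- Let g : ℝⁿ → ℝⁿ be convex, order-preserving and additively homogeneous, let u ∈ ℝⁿ be harmonic with respect to g, let C be the set of critical nodes of g and N = {1,…,n} ∖ C. Then the map h : ℝ^N → ℝ^N defined by h(y) = r_N(g(ι_N(y, u_C))) has a unique fixed point (and u_N is that fixed point). -/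
open Filter Topology

/-- The subdifferential of a (convex) self-map `g` of `ℝⁿ` at `u`: the set of matrices `M`
such that `g(x) − g(u) ≥ M(x − u)` componentwise for all `x`. -/
def Subdiff {n : ℕ} (g : (Fin n → ℝ) → (Fin n → ℝ)) (u : Fin n → ℝ) :
    Set (Matrix (Fin n) (Fin n) ℝ) :=
  {M | ∀ (x : Fin n → ℝ) (i : Fin n), g u i + M.mulVec (x - u) i ≤ g x i}

/-- `F` is a recurrence class of the matrix `M`: a (strongly connected, arc-closed)
strongly connected component of the digraph with an arc `(i,j)` whenever `M i j > 0`,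
such that every row of the `F×F` submatrix of `M` sums to `1`. -/
def IsRecClass {n : ℕ} (M : Matrix (Fin n) (Fin n) ℝ) (F : Finset (Fin n)) : Prop :=
  F.Nonempty ∧
  (∀ i ∈ F, ∀ j ∈ F, Relation.ReflTransGen (fun a b => 0 < M a b) i j) ∧
  (∀ i ∈ F, ∀ j, 0 < M i j → j ∈ F) ∧
  (∀ i ∈ F, ∑ j ∈ F, M i j = 1)

/-- `i` is a critical node of `g`: `i` belongs to a recurrence class of some matrix in the
subdifferential of `g` at some harmonic vector of `g` (this does not depend on the choice
of the harmonic vector). -/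
def IsCritical {n : ℕ} (g : (Fin n → ℝ) → (Fin n → ℝ)) (i : Fin n) : Prop :=
  ∃ u₀ : Fin n → ℝ, g u₀ = u₀ ∧
    ∃ M ∈ Subdiff g u₀, ∃ F : Finset (Fin n), IsRecClass M F ∧ i ∈ F

open Classical in
/-- `ι_N(y, u_C)`: the vector of `ℝⁿ` equal to `y` on the complement `N` of the set of
critical nodes of `g`, and to `u` on the critical nodes. -/
noncomputable def combineCrit {n : ℕ} (g : (Fin n → ℝ) → (Fin n → ℝ)) (u : Fin n → ℝ)
    (y : {i : Fin n // ¬ IsCritical g i} → ℝ) : Fin n → ℝ :=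
  fun j => if hj : IsCritical g j then u j else y ⟨j, hj⟩

/-!
Let `u` and `v` agree on a set `K` that meets every recurrence class of every matrix in `∂g(u)`, and
be fixed by `g` off `K`. If `w = v - u` had a positive maximum, then for `Q ∈ ∂g(v)` the inequality
`w ≤ Q w` off `K` and the substochasticity of `Q` force the rows of `Q` on the set `S` of maximizers
to sum to `1` and to be supported in `S`. On `S` the subgradients of `g` at `v` are exact at `u`, so
they are also subgradients at `u`: pasting the rows of `Q` on `S` into an element of `∂g(u)` gives a
matrix of `∂g(u)` with a recurrence class inside `S`, which avoids `K`. For `w = u - v` the same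
maximum principle applies directly to a matrix of `∂g(u)`.
-/

open Matrix

theorem exists_subgradient_of_continuousOn {E : Type*} [AddCommGroup E] [Module ℝ E]
    [TopologicalSpace E] [IsTopologicalAddGroup E] [ContinuousSMul ℝ E] {s : Set E} {φ : E → ℝ}
    (hs : IsOpen s) (hconv : ConvexOn ℝ s φ) (hcont : ContinuousOn φ s) {u : E} (hu : u ∈ s) :
    ∃ ℓ : E →L[ℝ] ℝ, ∀ x ∈ s, φ u + ℓ (x - u) ≤ φ x := by
  have hopen : IsOpen {p : E × ℝ | p.1 ∈ s ∧ φ p.1 < p.2} := by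
    have hdiff : ContinuousOn (fun p : E × ℝ => p.2 - φ p.1) (s ×ˢ Set.univ) :=
      continuousOn_snd.sub (hcont.comp continuousOn_fst fun _ hp => hp.1)
    convert hdiff.isOpen_inter_preimage (hs.prod isOpen_univ) (isOpen_Ioi (a := 0)) using 1
    ext p
    simp
  obtain ⟨f, hf⟩ := geometric_hahn_banach_point_open (x := (u, φ u))
    hconv.convex_strict_epigraph hopen (by simp)
  have hsplit (x : E) (t : ℝ) : f (x, t) = f (x, 0) + t * f (0, 1) := by
    rw [← smul_eq_mul, ← map_smul, ← map_add]
    simp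
  have hslope : 0 < f (0, 1) := by
    have h := hf (u, φ u + 1) ⟨hu, by simp⟩
    rw [hsplit u (φ u), hsplit u (φ u + 1)] at h
    linarith
  refine ⟨-(f (0, 1))⁻¹ • f.comp (.inl ℝ E ℝ), fun x hx => le_of_forall_gt_imp_ge_of_dense ?_⟩
  intro t ht
  have h := hf (x, t) ⟨hx, ht⟩
  have hsub : f (x - u, 0) = f (x, 0) - f (u, 0) := by rw [← map_sub]; simp
  rw [hsplit u, hsplit x] at h
  suffices φ u - (f (x, 0) - f (u, 0)) / f (0, 1) ≤ t by
    simpa [hsub, div_eq_inv_mul, ← sub_eq_add_neg] using this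
  rw [sub_le_iff_le_add, ← sub_le_iff_le_add', le_div_iff₀ hslope]
  linarith

section Substochastic

variable {ι : Type*} [Fintype ι]

/-- Nonnegative square matrices with row sums at most `1`. The subgradients of an order-preserving
additively subhomogeneous map are of this kind. -/
structure IsSubstochastic (M : Matrix ι ι ℝ) : Prop where
  nonneg (i j : ι) : 0 ≤ M i j
  row_sum_le_one (i : ι) : ∑ j, M i j ≤ 1

/-- A nonempty set of nodes on which `M` has row sums `1` and which no arc of `M` leaves. Unlike a
recurrence class it need not be strongly connected. -/
structure IsAbsorbing (M : Matrix ι ι ℝ) (S : Set ι) : Prop where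
  nonempty : S.Nonempty
  mem_of_pos {i j : ι} : i ∈ S → 0 < M i j → j ∈ S
  row_sum_eq_one {i : ι} : i ∈ S → ∑ j, M i j = 1

theorem IsAbsorbing.congr {M M' : Matrix ι ι ℝ} {S : Set ι} (hS : IsAbsorbing M S)
    (h : ∀ i ∈ S, M' i = M i) : IsAbsorbing M' S where
  nonempty := hS.nonempty
  mem_of_pos hi hpos := hS.mem_of_pos hi (by rwa [h _ hi] at hpos)
  row_sum_eq_one hi := by rw [h _ hi, hS.row_sum_eq_one hi]

theorem eq_max_of_max_le_sum_mul {p w : ι → ℝ} {m : ℝ} (hp : ∀ j, 0 ≤ p j) (hp1 : ∑ j, p j ≤ 1)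
    (hm : 0 < m) (hw : ∀ j, w j ≤ m) (h : m ≤ ∑ j, p j * w j) :
    ∑ j, p j = 1 ∧ ∑ j, p j * w j = m ∧ ∀ j, 0 < p j → w j = m := by
  have hgap_nonneg : ∀ j ∈ Finset.univ, 0 ≤ p j * (m - w j) :=
    fun j _ => mul_nonneg (hp j) (sub_nonneg.2 (hw j))
  have hgap : ∑ j, p j * (m - w j) = (∑ j, p j) * m - ∑ j, p j * w j := by
    simp only [mul_sub, Finset.sum_sub_distrib, Finset.sum_mul]
  have hgap_sum_nonneg := Finset.sum_nonneg hgap_nonneg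
  have hsum : ∑ j, p j = 1 := le_antisymm hp1 (le_of_mul_le_mul_right (by linarith) hm)
  rw [hsum, one_mul] at hgap
  have hmax : ∑ j, p j * w j = m := by linarith
  have hgap_zero : ∑ j, p j * (m - w j) = 0 := by rw [hgap, hmax, sub_self]
  refine ⟨hsum, hmax, fun j hj => ?_⟩
  have hj0 := (Finset.sum_eq_zero_iff_of_nonneg hgap_nonneg).1 hgap_zero j (Finset.mem_univ j)
  exact (sub_eq_zero.1 ((mul_eq_zero.1 hj0).resolve_left hj.ne')).symm

theorem IsSubstochastic.exists_isAbsorbing_of_pos {Q : Matrix ι ι ℝ} (hQ : IsSubstochastic Q)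
    {w : ι → ℝ} {K : Set ι} (hK : ∀ i ∈ K, w i ≤ 0) (hw : ∀ i ∉ K, w i ≤ (Q *ᵥ w) i) {i₀ : ι}
    (hpos : 0 < w i₀) :
    ∃ S, IsAbsorbing Q S ∧ Disjoint S K ∧ ∀ i ∈ S, (Q *ᵥ w) i = w i := by
  have : Nonempty ι := ⟨i₀⟩
  obtain ⟨k, hk⟩ := Finite.exists_max w
  have hk0 : 0 < w k := hpos.trans_le (hk i₀)
  have hnotMem : ∀ i, w i = w k → i ∉ K := fun i hi hiK => by linarith [hK i hiK]
  have hrow (i : ι) (hi : w i = w k) :=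
    eq_max_of_max_le_sum_mul (hQ.nonneg i) (hQ.row_sum_le_one i) hk0 hk (hi ▸ hw i (hnotMem i hi))
  refine ⟨{i | w i = w k}, ⟨⟨k, rfl⟩, ?_, ?_⟩, Set.disjoint_left.2 hnotMem, ?_⟩
  · exact fun {i j} hi hij => (hrow i hi).2.2 j hij
  · exact fun {i} hi => (hrow i hi).1
  · exact fun i hi => (hrow i hi).2.1.trans hi.symm

end Substochastic

theorem exists_mem_forall_reflTransGen_symm {α : Type*} {r : α → α → Prop} {S : Set α}
    (hfin : S.Finite) (hS : S.Nonempty) (hclosed : ∀ a ∈ S, ∀ b, r a b → b ∈ S) :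
    ∃ a ∈ S, ∀ b, Relation.ReflTransGen r a b → b ∈ S ∧ Relation.ReflTransGen r b a := by
  obtain ⟨a, haS, hmin⟩ :=
    hfin.exists_minimalFor (fun a => {b | Relation.ReflTransGen r a b}) S hS
  refine ⟨a, haS, fun b hab => ?_⟩
  have hbS : b ∈ S := by
    induction hab with
    | refl => exact haS
    | tail _ hbc ih => exact hclosed _ ih _ hbc
  exact ⟨hbS, hmin hbS (fun _ hbc => hab.trans hbc) Relation.ReflTransGen.refl⟩

section Dirichlet

variable {n : ℕ} {g : (Fin n → ℝ) → (Fin n → ℝ)} {u v : Fin n → ℝ} {K : Set (Fin n)}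

theorem IsAbsorbing.exists_isRecClass {M : Matrix (Fin n) (Fin n) ℝ} {S : Set (Fin n)}
    (hS : IsAbsorbing M S) (hM : ∀ i j, 0 ≤ M i j) : ∃ F, IsRecClass M F ∧ ↑F ⊆ S := by
  classical
  obtain ⟨a, -, ha⟩ := exists_mem_forall_reflTransGen_symm S.toFinite hS.nonempty
    fun _ hi _ => hS.mem_of_pos hi
  let F := Finset.univ.filter (Relation.ReflTransGen (fun i j => 0 < M i j) a)
  have mem_F {i : Fin n} : i ∈ F ↔ Relation.ReflTransGen (fun i j => 0 < M i j) a i := by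
    simp only [F, Finset.mem_filter, Finset.mem_univ, true_and]
  have hclosed : ∀ i ∈ F, ∀ j, 0 < M i j → j ∈ F :=
    fun i hi j hij => mem_F.2 ((mem_F.1 hi).tail hij)
  refine ⟨F, ⟨⟨a, mem_F.2 .refl⟩, ?_, hclosed, ?_⟩, fun i hi => (ha i (mem_F.1 hi)).1⟩
  · exact fun i hi j hj => (ha i (mem_F.1 hi)).2.trans (mem_F.1 hj)
  · intro i hi
    rw [← hS.row_sum_eq_one (ha i (mem_F.1 hi)).1]
    refine Finset.sum_subset F.subset_univ fun j _ hj => ?_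
    exact le_antisymm (not_lt.1 fun hij => hj (hclosed i hi j hij)) (hM i j)

/-- Additive subhomogeneity, `g(c𝟙 + x) ≤ c𝟙 + g(x)` for `c ≥ 0`; it makes the row sums of the
subgradients of `g` at most `1`. -/
def AddSubhomogeneous (g : (Fin n → ℝ) → (Fin n → ℝ)) : Prop :=
  ∀ c : ℝ, 0 ≤ c → ∀ x i, g (fun j => c + x j) i ≤ c + g x i

/-- `K` contains a node of each recurrence class of each matrix in `∂g(u)`: a set of boundary nodes
large enough for the Dirichlet problem `g(v) = v` off `K` to determine `v`. -/
def MeetsRecClasses (g : (Fin n → ℝ) → (Fin n → ℝ)) (u : Fin n → ℝ) (K : Set (Fin n)) : Prop :=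
  ∀ M ∈ Subdiff g u, ∀ F, IsRecClass M F → ∃ i ∈ F, i ∈ K

namespace Subdiff

theorem nonempty_of_convexOn (hconv : ∀ i, ConvexOn ℝ Set.univ (fun x => g x i))
    (u : Fin n → ℝ) : (Subdiff g u).Nonempty := by
  choose ℓ hℓ using fun i => exists_subgradient_of_continuousOn isOpen_univ (hconv i)
    ((hconv i).continuousOn isOpen_univ) (Set.mem_univ u)
  refine ⟨LinearMap.toMatrix' (LinearMap.pi fun i => (ℓ i : (Fin n → ℝ) →ₗ[ℝ] ℝ)), fun x i => ?_⟩
  rw [LinearMap.toMatrix'_mulVec]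
  exact hℓ i x (Set.mem_univ x)

theorem isSubstochastic (hmono : Monotone g) (hsub : AddSubhomogeneous g)
    {M : Matrix (Fin n) (Fin n) ℝ} (hM : M ∈ Subdiff g u) : IsSubstochastic M where
  nonneg i j := by
    have hsubgrad := hM (u - Pi.single j 1) i
    have hdecr := hmono (show u - Pi.single j 1 ≤ u by simp) i
    rw [sub_sub_cancel_left, mulVec_neg, mulVec_single_one, Pi.neg_apply, col_apply] at hsubgrad
    linarith
  row_sum_le_one i := by
    have hsubgrad := hM (fun j => 1 + u j) i
    have hshift : (fun j => 1 + u j) - u = 1 := by ext; simp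
    have hrow : (M *ᵥ 1) i = ∑ j, M i j := by simp only [mulVec, dotProduct_one]
    rw [hshift, hrow] at hsubgrad
    linarith [hsub 1 zero_le_one u i]

theorem sub_le_mulVec_sub {M : Matrix (Fin n) (Fin n) ℝ} (hM : M ∈ Subdiff g v)
    (u : Fin n → ℝ) (i : Fin n) : g v i - g u i ≤ (M *ᵥ (v - u)) i := by
  have h := hM u i
  rw [← neg_sub v u, mulVec_neg, Pi.neg_apply] at h
  linarith

open Classical in
theorem piecewise_mem {A B : Matrix (Fin n) (Fin n) ℝ} (hA : A ∈ Subdiff g u)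
    (hB : B ∈ Subdiff g v) {S : Set (Fin n)}
    (hexact : ∀ i ∈ S, (B *ᵥ (v - u)) i = g v i - g u i) : S.piecewise B A ∈ Subdiff g u := by
  intro x i
  by_cases hi : i ∈ S
  · have hrow : (S.piecewise B A *ᵥ (x - u)) i = (B *ᵥ (x - u)) i := by
      simp only [mulVec, Set.piecewise_eq_of_mem S B A hi]
    rw [hrow, ← sub_add_sub_cancel x v u, mulVec_add, Pi.add_apply, hexact i hi]
    linarith [hB x i]
  · have hrow : (S.piecewise B A *ᵥ (x - u)) i = (A *ᵥ (x - u)) i := by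
      simp only [mulVec, Set.piecewise_eq_of_notMem S B A hi]
    exact hrow ▸ hA x i

end Subdiff

theorem MeetsRecClasses.not_disjoint (hK : MeetsRecClasses g u K)
    {M : Matrix (Fin n) (Fin n) ℝ} (hM : M ∈ Subdiff g u) (hM0 : ∀ i j, 0 ≤ M i j)
    {S : Set (Fin n)} (hS : IsAbsorbing M S) : ¬ Disjoint S K := by
  obtain ⟨F, hF, hFS⟩ := hS.exists_isRecClass hM0
  obtain ⟨i, hiF, hiK⟩ := hK M hM F hF
  exact Set.not_disjoint_iff.2 ⟨i, hFS hiF, hiK⟩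

theorem le_supersolution (hconv : ∀ i, ConvexOn ℝ Set.univ (fun x => g x i))
    (hmono : Monotone g) (hsub : AddSubhomogeneous g) (hK : MeetsRecClasses g u K)
    (hu : ∀ i ∉ K, u i ≤ g u i) (hv : ∀ i ∉ K, g v i ≤ v i) (huv : ∀ i ∈ K, u i ≤ v i) :
    u ≤ v := by
  intro i₀
  by_contra! hi₀
  obtain ⟨A, hA⟩ := Subdiff.nonempty_of_convexOn hconv u
  have hAsub := Subdiff.isSubstochastic hmono hsub hA
  obtain ⟨S, hS, hSK, -⟩ := hAsub.exists_isAbsorbing_of_pos (w := u - v)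
    (fun i hi => sub_nonpos.2 (huv i hi))
    (fun i hi => (sub_le_sub (hu i hi) (hv i hi)).trans (Subdiff.sub_le_mulVec_sub hA v i))
    (sub_pos.2 hi₀)
  exact hK.not_disjoint hA hAsub.nonneg hS hSK

theorem subsolution_le (hconv : ∀ i, ConvexOn ℝ Set.univ (fun x => g x i))
    (hmono : Monotone g) (hsub : AddSubhomogeneous g) (hK : MeetsRecClasses g u K)
    (hu : ∀ i ∉ K, g u i ≤ u i) (hv : ∀ i ∉ K, v i ≤ g v i) (hvu : ∀ i ∈ K, v i ≤ u i) :
    v ≤ u := by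
  classical
  intro i₀
  by_contra! hi₀
  obtain ⟨A, hA⟩ := Subdiff.nonempty_of_convexOn hconv u
  obtain ⟨B, hB⟩ := Subdiff.nonempty_of_convexOn hconv v
  have hsubsol : ∀ i ∉ K, (v - u) i ≤ g v i - g u i := fun i hi => sub_le_sub (hv i hi) (hu i hi)
  obtain ⟨S, hS, hSK, hSeq⟩ :=
    (Subdiff.isSubstochastic hmono hsub hB).exists_isAbsorbing_of_pos (w := v - u)
      (fun i hi => sub_nonpos.2 (hvu i hi))
      (fun i hi => (hsubsol i hi).trans (Subdiff.sub_le_mulVec_sub hB u i))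
      (sub_pos.2 hi₀)
  have hexact : ∀ i ∈ S, (B *ᵥ (v - u)) i = g v i - g u i := fun i hi =>
    le_antisymm ((hSeq i hi).trans_le (hsubsol i (Set.disjoint_left.1 hSK hi)))
      (Subdiff.sub_le_mulVec_sub hB u i)
  have hpaste : S.piecewise B A ∈ Subdiff g u := Subdiff.piecewise_mem hA hB hexact
  exact hK.not_disjoint hpaste (Subdiff.isSubstochastic hmono hsub hpaste).nonneg
    (hS.congr fun i hi => Set.piecewise_eq_of_mem S B A hi) hSK

theorem unique_fixedPoint_on_noncritical_general
    (hconv : ∀ i, ConvexOn ℝ Set.univ (fun x => g x i)) (hmono : Monotone g)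
    (hsub : AddSubhomogeneous g) (hK : MeetsRecClasses g u K) (hu : ∀ i ∉ K, g u i = u i)
    (hv : ∀ i ∉ K, g v i = v i) (hvu : ∀ i ∈ K, v i = u i) : v = u :=
  le_antisymm
    (subsolution_le hconv hmono hsub hK (fun i hi => (hu i hi).le) (fun i hi => (hv i hi).ge)
      fun i hi => (hvu i hi).le)
    (le_supersolution hconv hmono hsub hK (fun i hi => (hu i hi).ge) (fun i hi => (hv i hi).le)
      fun i hi => (hvu i hi).ge)

theorem meetsRecClasses_setOf_isCritical (hu : g u = u) :
    MeetsRecClasses g u {i | IsCritical g i} := fun M hM F hF =>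
  hF.1.imp fun _ hi => ⟨hi, u, hu, M, hM, F, hF, hi⟩

section CombineCrit

variable {y : {i : Fin n // ¬ IsCritical g i} → ℝ}

theorem combineCrit_of_isCritical {i : Fin n} (hi : IsCritical g i) : combineCrit g u y i = u i :=
  dif_pos hi

theorem combineCrit_of_not_isCritical {i : Fin n} (hi : ¬ IsCritical g i) :
    combineCrit g u y i = y ⟨i, hi⟩ :=
  dif_neg hi

theorem combineCrit_eq_self_iff : combineCrit g u y = u ↔ y = fun i => u i.1 := by
  refine ⟨fun h => funext fun i => ?_, fun h => funext fun i => ?_⟩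
  · exact (combineCrit_of_not_isCritical i.2).symm.trans (congrFun h i.1)
  · by_cases hi : IsCritical g i
    · exact combineCrit_of_isCritical hi
    · rw [combineCrit_of_not_isCritical hi, h]

theorem apply_combineCrit_eq_of_fixedPoint
    (hy : (fun i : {i : Fin n // ¬ IsCritical g i} => g (combineCrit g u y) i.1) = y)
    {i : Fin n} (hi : ¬ IsCritical g i) : g (combineCrit g u y) i = combineCrit g u y i :=
  (congrFun hy ⟨i, hi⟩).trans (combineCrit_of_not_isCritical hi).symm

end CombineCrit

end Dirichlet

/-- Let `g : ℝⁿ → ℝⁿ` be convex, order-preserving and additively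
homogeneous, let `u` be harmonic with respect to `g`, let `C` be the set of critical
nodes of `g` and `N` its complement.  Then the map `h : ℝ^N → ℝ^N`,
`h(y) = r_N (g (ι_N(y, u_C)))`, has a unique fixed point, and `u_N` is that fixed point. -/
theorem unique_fixedPoint_on_noncritical
    (n : ℕ) (g : (Fin n → ℝ) → (Fin n → ℝ))
    (hconv : ∀ i, ConvexOn ℝ Set.univ (fun x => g x i))
    (hop : ∀ x y : Fin n → ℝ, x ≤ y → g x ≤ g y)
    (hah : ∀ (lam : ℝ) (x : Fin n → ℝ), g (fun i => lam + x i) = fun i => lam + g x i)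
    (u : Fin n → ℝ) (hu : g u = u) :
    ((fun i : {i : Fin n // ¬ IsCritical g i} =>
        g (combineCrit g u (fun i => u i.1)) i.1) = fun i => u i.1) ∧
    ∀ y : {i : Fin n // ¬ IsCritical g i} → ℝ,
      (fun i : {i : Fin n // ¬ IsCritical g i} => g (combineCrit g u y) i.1) = y →
      y = fun i => u i.1 := by
  refine ⟨by rw [combineCrit_eq_self_iff.2 rfl, hu], fun y hy => combineCrit_eq_self_iff.1 ?_⟩
  exact unique_fixedPoint_on_noncritical_general hconv (fun _ _ => hop _ _)
    (fun c _ x i => (congrFun (hah c x) i).le) (meetsRecClasses_setOf_isCritical hu)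
    (fun i _ => congrFun hu i) (fun _ => apply_combineCrit_eq_of_fixedPoint hy)
    (fun _ => combineCrit_of_isCritical)
end

section
/- Let g : ℝⁿ → ℝⁿ be convex, order-preserving and additively homogeneous with at least one harmonic vector, and let C be its set of critical nodes. If u ∈ ℝⁿ is super-harmonic with respect to g, then g(u)_i = u_i for every i ∈ C, the limit g^ω(u) := lim_{k→∞} g^k(u) exists, g^ω(u) is harmonic with respect to g, and g^ω(u)_i = u_i for every i ∈ C. -/
open Filter Topology

/-!
Let `M` be a subgradient of `g` at a harmonic vector `v`, and let `F` be a recurrence class of `M`.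
On `F`, super-harmonicity of `u` gives `M (u - v) ≤ g u - v ≤ u - v`, and the minimum principle for
the irreducible stochastic matrix `M` restricted to `F` forces `u - v` to be constant there, so both
inequalities are equalities. Iterates of `u` remain super-harmonic, decrease, and stay above a
translate of any given sub-harmonic vector; hence they converge, without moving the critical
coordinates. The limit is harmonic because `g` is nonexpansive in the sup norm.
-/

section RecurrenceClass

variable {n : ℕ} {M : Matrix (Fin n) (Fin n) ℝ} {F : Finset (Fin n)} {x : Fin n → ℝ}

theorem IsRecClass.mem_of_pos (hF : IsRecClass M F) {i j : Fin n} (hi : i ∈ F) (hij : 0 < M i j) :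
    j ∈ F :=
  hF.2.2.1 i hi j hij

theorem IsRecClass.sum_eq_one (hF : IsRecClass M F) {i : Fin n} (hi : i ∈ F) :
    ∑ j ∈ F, M i j = 1 :=
  hF.2.2.2 i hi

theorem IsRecClass.mulVec_apply (hF : IsRecClass M F) (hM : ∀ i j, 0 ≤ M i j) {i : Fin n}
    (hi : i ∈ F) (x : Fin n → ℝ) : M.mulVec x i = ∑ j ∈ F, M i j * x j := by
  refine (Finset.sum_subset F.subset_univ fun j _ hj => ?_).symm
  have hij : M i j = 0 := le_antisymm (not_lt.1 fun h => hj (hF.mem_of_pos hi h)) (hM i j)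
  exact mul_eq_zero_of_left hij (x j)

theorem IsRecClass.eq_of_isMinOn_of_pos (hF : IsRecClass M F) (hM : ∀ i j, 0 ≤ M i j)
    {i j : Fin n} (hi : i ∈ F) (hmin : IsMinOn x F i) (hx : M.mulVec x i ≤ x i)
    (hij : 0 < M i j) : x j = x i := by
  have hnonneg : ∀ k ∈ F, 0 ≤ M i k * (x k - x i) := fun k hk =>
    mul_nonneg (hM i k) (sub_nonneg.2 (hmin hk))
  have hsum : ∑ k ∈ F, M i k * (x k - x i) ≤ 0 := by
    rw [hF.mulVec_apply hM hi] at hx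
    simpa only [mul_sub, Finset.sum_sub_distrib, ← Finset.sum_mul, hF.sum_eq_one hi, one_mul,
      sub_nonpos] using hx
  have hzero : M i j * (x j - x i) = 0 :=
    (Finset.sum_eq_zero_iff_of_nonneg hnonneg).1 (hsum.antisymm (Finset.sum_nonneg hnonneg)) j
      (hF.mem_of_pos hi hij)
  exact sub_eq_zero.1 ((mul_eq_zero.1 hzero).resolve_left hij.ne')

theorem IsRecClass.exists_forall_eq_of_mulVec_le (hF : IsRecClass M F) (hM : ∀ i j, 0 ≤ M i j)
    (hx : ∀ i ∈ F, M.mulVec x i ≤ x i) : ∃ c, ∀ i ∈ F, x i = c := by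
  have ⟨hne, hconn, _⟩ := hF
  obtain ⟨m, hmF, hmin⟩ := F.exists_min_image x hne
  have hpath (i : Fin n) (hmi : Relation.ReflTransGen (fun a b => 0 < M a b) m i) :
      i ∈ F ∧ x i = x m := by
    induction hmi with
    | refl => exact ⟨hmF, rfl⟩
    | @tail a b _ hab ih =>
      obtain ⟨haF, hxa⟩ := ih
      have hmin_a : IsMinOn x F a := fun k hk => hxa.trans_le (hmin k hk)
      exact ⟨hF.mem_of_pos haF hab,
        (hF.eq_of_isMinOn_of_pos hM haF hmin_a (hx a haF) hab).trans hxa⟩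
  exact ⟨x m, fun i hi => (hpath i (hconn m hmF i hi)).2⟩

theorem IsRecClass.mulVec_eq_of_mulVec_le (hF : IsRecClass M F) (hM : ∀ i j, 0 ≤ M i j)
    (hx : ∀ i ∈ F, M.mulVec x i ≤ x i) {i : Fin n} (hi : i ∈ F) : M.mulVec x i = x i := by
  obtain ⟨c, hc⟩ := hF.exists_forall_eq_of_mulVec_le hM hx
  calc
    M.mulVec x i = ∑ j ∈ F, M i j * x j := hF.mulVec_apply hM hi x
    _ = ∑ j ∈ F, M i j * c := Finset.sum_congr rfl fun j hj => by rw [hc j hj]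
    _ = x i := by rw [← Finset.sum_mul, hF.sum_eq_one hi, one_mul, hc i hi]

end RecurrenceClass

section CriticalNode

variable {n : ℕ} {g : (Fin n → ℝ) → (Fin n → ℝ)} {u v : Fin n → ℝ} {i : Fin n}

theorem nonneg_of_mem_subdiff (hg : Monotone g) {M : Matrix (Fin n) (Fin n) ℝ}
    (hM : M ∈ Subdiff g v) (i j : Fin n) : 0 ≤ M i j := by
  have hdecr : g (v - Pi.single j 1) i ≤ g v i :=
    hg (sub_le_self v (Pi.single_nonneg.2 zero_le_one)) i
  have hsub : g v i - M i j ≤ g (v - Pi.single j 1) i := by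
    have h := hM (v - Pi.single j 1) i
    rwa [sub_sub_cancel_left, Matrix.mulVec_neg, Matrix.mulVec_single_one, Pi.neg_apply,
      Matrix.col_apply, ← sub_eq_add_neg] at h
  linarith

theorem IsCritical.map_eq (hi : IsCritical g i) (hg : Monotone g) (hu : g u ≤ u) :
    g u i = u i := by
  obtain ⟨v, hv, M, hM, F, hF, hiF⟩ := hi
  have hsub (j : Fin n) : M.mulVec (u - v) j ≤ g u j - v j := by
    have h := hM u j
    rwa [hv, ← le_sub_iff_add_le'] at h
  have hsuper : ∀ j ∈ F, M.mulVec (u - v) j ≤ (u - v) j := fun j _ =>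
    (hsub j).trans (sub_le_sub_right (hu j) (v j))
  have heq : M.mulVec (u - v) i = u i - v i :=
    hF.mulVec_eq_of_mulVec_le (nonneg_of_mem_subdiff hg hM) hsuper hiF
  have hle := hsub i
  rw [heq] at hle
  exact (hu i).antisymm ((sub_le_sub_iff_right (v i)).1 hle)

theorem IsCritical.iterate_eq (hi : IsCritical g i) (hg : Monotone g) (hu : g u ≤ u) (k : ℕ) :
    g^[k] u i = u i := by
  induction k generalizing u with
  | zero => rfl
  | succ k ih =>
    rw [Function.iterate_succ_apply, ih (hg hu), hi.map_eq hg hu]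

end CriticalNode

theorem exists_tendsto_iterate_isFixedPt {α : Type*} [ConditionallyCompletePartialOrderInf α]
    [TopologicalSpace α] [InfConvergenceClass α] [T2Space α] {f : α → α} (hf : Monotone f)
    (hcont : Continuous f) {a b : α} (ha : a ≤ f a) (hab : a ≤ b) (hb : f b ≤ b) :
    ∃ c, Tendsto (fun k : ℕ => f^[k] b) atTop (𝓝 c) ∧ Function.IsFixedPt f c := by
  have hbdd : BddBelow (Set.range fun k : ℕ => f^[k] b) := by
    refine ⟨a, Set.forall_mem_range.2 fun k => ?_⟩
    exact (hf.monotone_iterate_of_le_map ha (Nat.zero_le k)).trans (hf.iterate k hab)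
  have hlim := tendsto_atTop_ciInf (hf.antitone_iterate_of_map_le hb) hbdd
  exact ⟨_, hlim, isFixedPt_of_tendsto_iterate hlim hcont.continuousAt⟩

/-- Additive subhomogeneity of a self-map of `ℝ^ι`: translating the argument by a nonnegative
multiple of the all-ones vector raises the value by at most that multiple. Additive homogeneity is
equality for every real multiple. -/
def IsAdditivelySubhomogeneous {ι : Type*} (g : (ι → ℝ) → (ι → ℝ)) : Prop :=
  ∀ c : ℝ, 0 ≤ c → ∀ x : ι → ℝ, g (Function.const ι c + x) ≤ Function.const ι c + g x

namespace IsAdditivelySubhomogeneous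

variable {ι : Type*} {g : (ι → ℝ) → (ι → ℝ)}

theorem lipschitzWith_one [Fintype ι] (hsub : IsAdditivelySubhomogeneous g) (hg : Monotone g) :
    LipschitzWith 1 g := by
  have hle (x y : ι → ℝ) (i : ι) : g x i ≤ dist x y + g y i := by
    have hxy : x ≤ Function.const ι (dist x y) + y := fun j =>
      sub_le_iff_le_add.1 ((le_abs_self _).trans (dist_le_pi_dist x y j))
    exact (hg hxy i).trans (hsub _ dist_nonneg y i)
  refine LipschitzWith.of_dist_le_mul fun x y => ?_
  rw [NNReal.coe_one, one_mul, dist_pi_le_iff dist_nonneg]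
  refine fun i => abs_sub_le_iff.2 ⟨sub_le_iff_le_add.2 (hle x y i), ?_⟩
  rw [dist_comm x y]
  exact sub_le_iff_le_add.2 (hle y x i)

theorem exists_le_map_and_le [Finite ι] (hsub : IsAdditivelySubhomogeneous g) {v : ι → ℝ}
    (hv : v ≤ g v) (u : ι → ℝ) : ∃ a, a ≤ g a ∧ a ≤ u := by
  have := Fintype.ofFinite ι
  refine ⟨v - Function.const ι (dist v u), ?_, fun i => ?_⟩
  · have hshift := hsub (dist v u) dist_nonneg (v - Function.const ι (dist v u))
    rw [add_sub_cancel] at hshift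
    exact sub_le_iff_le_add'.2 (hv.trans hshift)
  · exact sub_le_comm.1 ((le_abs_self _).trans (dist_le_pi_dist v u i))

end IsAdditivelySubhomogeneous

theorem superharmonic_iterates_converge_general {n : ℕ} {g : (Fin n → ℝ) → (Fin n → ℝ)}
    (hg : Monotone g) (hsub : IsAdditivelySubhomogeneous g) {v : Fin n → ℝ} (hv : v ≤ g v)
    {u : Fin n → ℝ} (hu : g u ≤ u) :
    (∀ i : Fin n, IsCritical g i → g u i = u i) ∧
    ∃ w : Fin n → ℝ, Tendsto (fun k : ℕ => g^[k] u) atTop (𝓝 w) ∧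
      g w = w ∧ ∀ i : Fin n, IsCritical g i → w i = u i := by
  obtain ⟨a, ha, hau⟩ := hsub.exists_le_map_and_le hv u
  obtain ⟨w, hlim, hw⟩ :=
    exists_tendsto_iterate_isFixedPt hg (hsub.lipschitzWith_one hg).continuous ha hau hu
  refine ⟨fun i hi => hi.map_eq hg hu, w, hlim, hw, fun i hi => ?_⟩
  have hlim_i : Tendsto (fun k : ℕ => g^[k] u i) atTop (𝓝 (w i)) := tendsto_pi_nhds.1 hlim i
  simp only [hi.iterate_eq hg hu] at hlim_i
  exact tendsto_nhds_unique hlim_i tendsto_const_nhds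

/-- Let `g : ℝⁿ → ℝⁿ` be convex, order-preserving and additively
homogeneous with at least one harmonic vector, and let `C` be its set of critical nodes.
If `u` is super-harmonic with respect to `g`, then `g(u)ᵢ = uᵢ` for every critical node
`i`, the limit `g^ω(u) = lim_{k→∞} g^k(u)` exists, is harmonic with respect to `g`, and
coincides with `u` on the critical nodes. -/
theorem superharmonic_iterates_converge
    (n : ℕ) (g : (Fin n → ℝ) → (Fin n → ℝ))
    (hconv : ∀ i, ConvexOn ℝ Set.univ (fun x => g x i))
    (hop : ∀ x y : Fin n → ℝ, x ≤ y → g x ≤ g y)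
    (hah : ∀ (lam : ℝ) (x : Fin n → ℝ), g (fun i => lam + x i) = fun i => lam + g x i)
    (u₀ : Fin n → ℝ) (hu₀ : g u₀ = u₀)
    (u : Fin n → ℝ) (hu : g u ≤ u) :
    (∀ i : Fin n, IsCritical g i → g u i = u i) ∧
    ∃ w : Fin n → ℝ, Tendsto (fun k : ℕ => g^[k] u) atTop (𝓝 w) ∧
      g w = w ∧ ∀ i : Fin n, IsCritical g i → w i = u i :=
  superharmonic_iterates_converge_general (fun x y h => hop x y h) (fun c _ x => (hah c x).le)
    hu₀.ge hu
end

section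
/- Let g : ℝⁿ → ℝⁿ be convex, order-preserving and additively homogeneous with at least one harmonic vector, and define Q_g(u) := lim_{k→∞} g^k(u) for every super-harmonic vector u. Then Q_g maps the set of super-harmonic vectors into the set of harmonic vectors, Q_g(v) = v for every harmonic vector v (so Q_g is a projector onto the harmonic vectors), Q_g is order-preserving (u ≤ u' implies Q_g(u) ≤ Q_g(u')), Q_g is additively homogeneous (Q_g(λ𝟙 + u) = λ𝟙 + Q_g(u) for all λ ∈ ℝ), and every coordinate of Q_g is a convex function on the convex set of super-harmonic vectors. -/
open Filter Topology

/-!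
Each power `g^k` inherits from `g` that it is order-preserving, convex and commutes with the
translations that `g` commutes with. For convexity, order preservation turns the inequality for
`g^k` into `g^(k+1)(a x + b y) ≤ g(a g^k(x) + b g^k(y))`, and convexity of `g` finishes the step.
These properties are closed under pointwise limits, so `Q` has them too. The limit of an orbit is
a fixed point because `g` is continuous, which is automatic for a convex map in finite dimension.
-/

section

open Function Set

section ConvexOn

variable {𝕜 E F : Type*} [Semiring 𝕜] [PartialOrder 𝕜]

theorem convexOn_of_tendsto [AddCommMonoid E] [SMul 𝕜 E]
    [AddCommMonoid F] [PartialOrder F] [TopologicalSpace F] [OrderClosedTopology F]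
    [ContinuousAdd F] [SMul 𝕜 F] [ContinuousConstSMul 𝕜 F]
    {κ : Type*} {l : Filter κ} [l.NeBot] {s : Set E} {f : κ → E → F} {f' : E → F}
    (hf : ∀ k, ConvexOn 𝕜 s (f k)) (hlim : ∀ x ∈ s, Tendsto (f · x) l (𝓝 (f' x))) :
    ConvexOn 𝕜 s f' := by
  obtain ⟨k₀⟩ := l.nonempty_of_neBot
  have hs : Convex 𝕜 s := (hf k₀).1
  refine ⟨hs, fun x hx y hy a b ha hb hab => ?_⟩
  exact le_of_tendsto_of_tendsto' (hlim _ (hs hx hy ha hb hab))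
    (((hlim x hx).const_smul a).add ((hlim y hy).const_smul b))
    fun k => (hf k).2 hx hy ha hb hab

theorem convexOn_pi [AddCommMonoid E] [SMul 𝕜 E] {ι : Type*} {M : ι → Type*}
    [∀ i, AddCommMonoid (M i)] [∀ i, PartialOrder (M i)] [∀ i, SMul 𝕜 (M i)]
    {s : Set E} (hs : Convex 𝕜 s) {f : E → ∀ i, M i} :
    ConvexOn 𝕜 s f ↔ ∀ i, ConvexOn 𝕜 s (f · i) :=
  ⟨fun hf i => ⟨hs, fun _ hx _ hy _ _ ha hb hab => hf.2 hx hy ha hb hab i⟩,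
    fun hf => ⟨hs, fun _ hx _ hy _ _ ha hb hab i => (hf i).2 hx hy ha hb hab⟩⟩

theorem convexOn_iterate [AddCommMonoid E] [PartialOrder E] [SMul 𝕜 E] {s : Set E} {g : E → E}
    (hg : ConvexOn 𝕜 s g) (hmono : MonotoneOn g s) (hmaps : MapsTo g s s) (k : ℕ) :
    ConvexOn 𝕜 s g^[k] := by
  induction k with
  | zero => exact convexOn_id hg.1
  | succ k ih =>
    refine ⟨hg.1, fun x hx y hy a b ha hb hab => ?_⟩
    have hxk : g^[k] x ∈ s := hmaps.iterate k hx
    have hyk : g^[k] y ∈ s := hmaps.iterate k hy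
    simp only [iterate_succ_apply']
    calc g (g^[k] (a • x + b • y))
        ≤ g (a • g^[k] x + b • g^[k] y) :=
          hmono (hmaps.iterate k (hg.1 hx hy ha hb hab)) (hg.1 hxk hyk ha hb hab)
            (ih.2 hx hy ha hb hab)
      _ ≤ a • g (g^[k] x) + b • g (g^[k] y) := hg.2 hxk hyk ha hb hab

theorem continuous_of_convexOn_univ_pi {V ι : Type*} [NormedAddCommGroup V] [NormedSpace ℝ V]
    [FiniteDimensional ℝ V] {f : V → ι → ℝ} (hf : ConvexOn ℝ univ f) : Continuous f :=
  continuous_pi fun i => ((convexOn_pi convex_univ).1 hf i).locallyLipschitz.continuous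

end ConvexOn

/-- The set of super-harmonic vectors of `g`. The harmonic vectors are `Function.fixedPoints g`. -/
def superharmonicSet {E : Type*} [LE E] (g : E → E) : Set E := {u | g u ≤ u}

section superharmonicSet

variable {E : Type*} {g : E → E}

theorem fixedPoints_subset_superharmonicSet [Preorder E] :
    fixedPoints g ⊆ superharmonicSet g :=
  fun _ hv => hv.le

theorem mapsTo_superharmonicSet_of_commute [Preorder E] {T : E → E} (hT : Function.Commute g T)
    (hmono : Monotone T) : MapsTo T (superharmonicSet g) (superharmonicSet g) :=
  fun u hu => (hT u).trans_le (hmono hu)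

theorem convex_superharmonicSet {𝕜 : Type*} [Semiring 𝕜] [PartialOrder 𝕜] [AddCommMonoid E]
    [PartialOrder E] [IsOrderedAddMonoid E] [Module 𝕜 E] [PosSMulMono 𝕜 E]
    (hg : ConvexOn 𝕜 univ g) : Convex 𝕜 (superharmonicSet g) :=
  fun x hx y hy a b ha hb hab =>
    calc g (a • x + b • y)
        ≤ a • g x + b • g y := hg.2 (mem_univ x) (mem_univ y) ha hb hab
      _ ≤ a • x + b • y :=
        add_le_add (smul_le_smul_of_nonneg_left hx ha) (smul_le_smul_of_nonneg_left hy hb)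

end superharmonicSet

/-- `Q` is the spectral projector of `g`: it sends every super-harmonic vector `u` to
`lim_{k→∞} g^k(u)`. Existence of the limits is part of the notion, and `Q` is arbitrary at vectors
that are not super-harmonic. -/
def IsSpectralProjector {E : Type*} [LE E] [TopologicalSpace E] (g Q : E → E) : Prop :=
  ∀ u ∈ superharmonicSet g, Tendsto (fun k : ℕ => g^[k] u) atTop (𝓝 (Q u))

namespace IsSpectralProjector

variable {E : Type*} [TopologicalSpace E] {g Q : E → E}

theorem mapsTo_fixedPoints [LE E] [T2Space E] (hQ : IsSpectralProjector g Q)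
    (hcont : Continuous g) : MapsTo Q (superharmonicSet g) (fixedPoints g) :=
  fun u hu => isFixedPt_of_tendsto_iterate (hQ u hu) hcont.continuousAt

theorem eqOn_id_fixedPoints [Preorder E] [T2Space E] (hQ : IsSpectralProjector g Q) :
    EqOn Q id (fixedPoints g) := fun v hv => by
  have hlim := hQ v (fixedPoints_subset_superharmonicSet hv)
  simp only [iterate_fixed hv] at hlim
  exact tendsto_nhds_unique hlim tendsto_const_nhds

theorem monotoneOn [Preorder E] [OrderClosedTopology E] (hQ : IsSpectralProjector g Q)
    (hmono : Monotone g) : MonotoneOn Q (superharmonicSet g) :=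
  fun u hu u' hu' huu' =>
    le_of_tendsto_of_tendsto' (hQ u hu) (hQ u' hu') fun k => hmono.iterate k huu'

theorem map_of_commute [Preorder E] [T2Space E] (hQ : IsSpectralProjector g Q) {T : E → E}
    (hT : Function.Commute g T) (hmono : Monotone T) (hcont : Continuous T)
    {u : E} (hu : u ∈ superharmonicSet g) : Q (T u) = T (Q u) := by
  have hlim := hQ (T u) (mapsTo_superharmonicSet_of_commute hT hmono hu)
  simp only [(hT.iterate_left _).eq] at hlim
  exact tendsto_nhds_unique hlim ((hcont.tendsto (Q u)).comp (hQ u hu))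

theorem convexOn {𝕜 : Type*} [Semiring 𝕜] [PartialOrder 𝕜] [AddCommMonoid E] [PartialOrder E]
    [IsOrderedAddMonoid E] [OrderClosedTopology E] [ContinuousAdd E] [Module 𝕜 E]
    [PosSMulMono 𝕜 E] [ContinuousConstSMul 𝕜 E] (hQ : IsSpectralProjector g Q)
    (hconv : ConvexOn 𝕜 univ g) (hmono : Monotone g) : ConvexOn 𝕜 (superharmonicSet g) Q :=
  have hiter (k : ℕ) : ConvexOn 𝕜 univ g^[k] :=
    convexOn_iterate hconv (hmono.monotoneOn univ) (mapsTo_univ g univ) k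
  convexOn_of_tendsto
    (fun k => (hiter k).subset (subset_univ _) (convex_superharmonicSet hconv)) hQ

end IsSpectralProjector

theorem spectral_projector_properties_general {ι : Type*} [Finite ι]
    {g Q : (ι → ℝ) → ι → ℝ} (hconv : ConvexOn ℝ univ g) (hmono : Monotone g)
    (hQ : IsSpectralProjector g Q) :
    MapsTo Q (superharmonicSet g) (fixedPoints g) ∧
    EqOn Q id (fixedPoints g) ∧
    MonotoneOn Q (superharmonicSet g) ∧
    (∀ w, Function.Commute g (w + ·) → ∀ u ∈ superharmonicSet g, Q (w + u) = w + Q u) ∧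
    ConvexOn ℝ (superharmonicSet g) Q := by
  have := Fintype.ofFinite ι
  exact ⟨hQ.mapsTo_fixedPoints (continuous_of_convexOn_univ_pi hconv), hQ.eqOn_id_fixedPoints,
    hQ.monotoneOn hmono,
    fun w hw _ hu => hQ.map_of_commute hw add_right_mono (continuous_const_add w) hu,
    hQ.convexOn hconv hmono⟩

end

/-- Let `g : ℝⁿ → ℝⁿ` be convex, order-preserving and additively
homogeneous with at least one harmonic vector, and let `Q` satisfy
`Q(u) = lim_{k→∞} g^k(u)` for every super-harmonic `u` (`g(u) ≤ u`).  Then `Q` maps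
super-harmonic vectors to harmonic vectors, fixes every harmonic vector (so it is a
projector onto the harmonic vectors), is order-preserving and additively homogeneous on
super-harmonic vectors, and every coordinate of `Q` is a convex function on the (convex)
set of super-harmonic vectors. -/
theorem spectral_projector_properties
    (n : ℕ) (g : (Fin n → ℝ) → (Fin n → ℝ))
    (hconv : ∀ i, ConvexOn ℝ Set.univ (fun x => g x i))
    (hop : ∀ x y : Fin n → ℝ, x ≤ y → g x ≤ g y)
    (hah : ∀ (lam : ℝ) (x : Fin n → ℝ), g (fun i => lam + x i) = fun i => lam + g x i)
    (u₀ : Fin n → ℝ) (hu₀ : g u₀ = u₀)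
    (Q : (Fin n → ℝ) → (Fin n → ℝ))
    (hQ : ∀ u : Fin n → ℝ, g u ≤ u → Tendsto (fun k : ℕ => g^[k] u) atTop (𝓝 (Q u))) :
    (∀ u : Fin n → ℝ, g u ≤ u → g (Q u) = Q u) ∧
    (∀ v : Fin n → ℝ, g v = v → Q v = v) ∧
    (∀ u u' : Fin n → ℝ, g u ≤ u → g u' ≤ u' → u ≤ u' → Q u ≤ Q u') ∧
    (∀ (lam : ℝ) (u : Fin n → ℝ), g u ≤ u →
      Q (fun i => lam + u i) = fun i => lam + Q u i) ∧
    (∀ i : Fin n, ConvexOn ℝ {u : Fin n → ℝ | g u ≤ u} (fun u => Q u i)) := by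
  obtain ⟨hharm, hfix, hmono, htrans, hQconv⟩ :=
    spectral_projector_properties_general ((convexOn_pi convex_univ).2 hconv) hop hQ
  exact ⟨hharm, hfix, fun _ _ hu hu' => hmono hu hu', fun lam => htrans (fun _ => lam) (hah lam),
    (convexOn_pi hQconv.1).1 hQconv⟩
end

section
/- Let g : ℝⁿ → ℝⁿ be convex (every coordinate g_i : ℝⁿ → ℝ is a finite convex function), let u ∈ ℝⁿ, let N ⊆ {1,…,n} with complement C, and define h : ℝ^N → ℝ^N by h(y) = r_N(g(ι_N(y, u_C))). Then ∂h(u_N) = {M_{NN} : M ∈ ∂g(u)}, where M_{NN} denotes the N×N submatrix of M. -/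
open Filter Topology

/-- The subdifferential of a (convex) self-map `g` of `ℝ^ι` at `u`: the set of matrices
`M` such that `g(x) − g(u) ≥ M(x − u)` componentwise for all `x`. -/
def SubdiffG {ι : Type*} [Fintype ι] (g : (ι → ℝ) → (ι → ℝ)) (u : ι → ℝ) :
    Set (Matrix ι ι ℝ) :=
  {M | ∀ (x : ι → ℝ) (i : ι), g u i + M.mulVec (x - u) i ≤ g x i}

/-!
Row by row, a matrix in `∂g(u)` is a choice of one subgradient of each coordinate `g i` at `u`, so
the theorem reduces to the chain rule `∂(f ∘ A)(u) = A* ∂f(A u)` for a finite convex `f` and an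
affine map `A`, applied to `A = ι_N(·, u_C)`; here `A*` is the dual of the linear part of `A`. A
subgradient of `f ∘ A` prescribes a linear functional on the range of the linear part, and the
Hahn–Banach theorem with a convex (rather than sublinear) majorant extends it to a subgradient of
`f`. The rows outside `N` are unconstrained and only need some subgradient to exist, which is the
chain rule for constant `A`.
-/

section HahnBanach

variable {E : Type*} [AddCommGroup E] [Module ℝ E]

/-- The pointed cone obtained from a convex cone by adjoining the origin. -/
def adjoinZero (C : ConvexCone ℝ E) : PointedCone ℝ E where
  carrier := insert 0 C
  zero_mem' := Set.mem_insert 0 _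
  add_mem' := by
    rintro x y (rfl | hx) (rfl | hy)
    · simp
    · simpa using Or.inr hy
    · simpa using Or.inr hx
    · exact Or.inr (C.add_mem hx hy)
  smul_mem' := by
    rintro ⟨c, hc⟩ x (rfl | hx)
    · simp
    · rcases hc.eq_or_lt with rfl | hc
      · exact Or.inl (zero_smul ℝ x)
      · exact Or.inr (C.smul_mem hc hx)

theorem riesz_extension_of_convex {s : Set E} (hs : Convex ℝ s) (f : E →ₗ.[ℝ] ℝ)
    (nonneg : ∀ x : f.domain, (x : E) ∈ s → 0 ≤ f x)
    (dense : ∀ y, ∃ x : f.domain, (x : E) + y ∈ s) :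
    ∃ g : E →ₗ[ℝ] ℝ, (∀ x : f.domain, g x = f x) ∧ ∀ x ∈ s, 0 ≤ g x := by
  let K : PointedCone ℝ E := adjoinZero (ConvexCone.hull ℝ s)
  have subset_K : s ⊆ K := fun x hx => Or.inr (ConvexCone.subset_hull hx)
  have nonneg_K : ∀ x : f.domain, (x : E) ∈ K → 0 ≤ f x := by
    rintro x (hx | hx)
    · rw [(Subtype.ext hx : x = 0), f.map_zero]
    · obtain ⟨r, hr, y, hy, hyx : r • y = x⟩ := (ConvexCone.mem_hull_of_convex hs).1 hx
      have hy_eq : r⁻¹ • (x : E) = y := by rw [← hyx, inv_smul_smul₀ hr.ne']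
      have h : 0 ≤ f (r⁻¹ • x) := nonneg _ (by simpa [hy_eq] using hy)
      rw [f.map_smul, smul_eq_mul] at h
      exact nonneg_of_mul_nonneg_right h (inv_pos.2 hr)
  obtain ⟨g, g_eq, g_nonneg⟩ :=
    riesz_extension K f nonneg_K fun y => (dense y).imp fun _ hx => subset_K hx
  exact ⟨g, g_eq, fun x hx => g_nonneg x (subset_K hx)⟩

theorem exists_extension_of_le_convexOn {φ : E → ℝ} (hφ : ConvexOn ℝ Set.univ φ)
    (f : E →ₗ.[ℝ] ℝ) (hf : ∀ x : f.domain, f x ≤ φ x) :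
    ∃ g : E →ₗ[ℝ] ℝ, (∀ x : f.domain, g x = f x) ∧ ∀ x, g x ≤ φ x := by
  -- Extend `(x, r) ↦ r - f x` so that it stays nonnegative on the epigraph of `φ`.
  let F : (E × ℝ) →ₗ.[ℝ] ℝ := (-f).coprod (LinearMap.id.toPMap ⊤)
  have F_nonneg : ∀ z : F.domain, (z : E × ℝ) ∈ {p : E × ℝ | p.1 ∈ Set.univ ∧ φ p.1 ≤ p.2} →
      0 ≤ F z := fun z hz => by
    simpa [F] using (hf ⟨z.1.1, z.2.1⟩).trans hz.2
  obtain ⟨G, G_eq, G_nonneg⟩ := riesz_extension_of_convex hφ.convex_epigraph F F_nonneg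
    fun ⟨x, r⟩ => ⟨⟨(0, φ x - r), f.domain.zero_mem, trivial⟩, by simp⟩
  have G_apply : ∀ (x : f.domain) (r : ℝ), G (x, r) = r - f x := fun x r =>
    (G_eq ⟨(x, r), x.2, trivial⟩).trans (sub_eq_neg_add _ _).symm
  refine ⟨-(G ∘ₗ LinearMap.inl ℝ E ℝ), fun x => by simp [G_apply], fun x => ?_⟩
  calc -G (x, 0) = G (0, φ x) - G (x, φ x) := by simp [← map_sub, ← map_neg]
    _ = φ x - G (x, φ x) := by simpa using G_apply 0 (φ x)
    _ ≤ φ x := sub_le_self _ (G_nonneg _ ⟨trivial, le_rfl⟩)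

end HahnBanach

section Subdifferential

variable {E F : Type*} [AddCommGroup E] [Module ℝ E] [AddCommGroup F] [Module ℝ F]

/-- The (algebraic) subdifferential `∂f(u)` of a real-valued function: the linear functionals
`L` with `f(x) ≥ f(u) + L(x - u)` for all `x`. No continuity of `L` is required, so that no topology
on `E` is needed. -/
def subdifferential (f : E → ℝ) (u : E) : Set (Module.Dual ℝ E) :=
  {L | ∀ x, f u + L (x - u) ≤ f x}

theorem dualMap_mem_subdifferential_comp {f : F → ℝ} (A : E →ᵃ[ℝ] F) {u : E}
    {L : Module.Dual ℝ F} (hL : L ∈ subdifferential f (A u)) :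
    A.linear.dualMap L ∈ subdifferential (f ∘ A) u := fun x => by
  have h := hL (A x)
  rwa [← vsub_eq_sub, ← A.linearMap_vsub] at h

theorem mem_dualAnnihilator_ker_of_mem_subdifferential_comp {f : F → ℝ} {A : E →ᵃ[ℝ] F} {u : E}
    {L : Module.Dual ℝ E} (hL : L ∈ subdifferential (f ∘ A) u) :
    L ∈ A.linear.ker.dualAnnihilator := by
  have nonpos : ∀ k ∈ A.linear.ker, L k ≤ 0 := fun k hk => by
    have A_add : A (k + u) = A u := by
      rw [← vadd_eq_add, A.map_vadd, LinearMap.mem_ker.1 hk, zero_vadd]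
    simpa [A_add] using hL (k + u)
  refine (Submodule.mem_dualAnnihilator L).2 fun k hk => (nonpos k hk).antisymm ?_
  simpa using nonpos (-k) (neg_mem hk)

theorem subdifferential_comp_affineMap {f : F → ℝ} (hf : ConvexOn ℝ Set.univ f)
    (A : E →ᵃ[ℝ] F) (u : E) :
    subdifferential (f ∘ A) u = A.linear.dualMap '' subdifferential f (A u) := by
  refine Set.Subset.antisymm (fun L hL => ?_)
    (Set.image_subset_iff.2 fun L => dualMap_mem_subdifferential_comp A)
  obtain ⟨L₀, rfl⟩ : ∃ L₀, A.linear.dualMap L₀ = L := by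
    rw [← LinearMap.mem_range, LinearMap.range_dualMap_eq_dualAnnihilator_ker]
    exact mem_dualAnnihilator_ker_of_mem_subdifferential_comp hL
  have convex_increment : ConvexOn ℝ Set.univ fun x => f (A u + x) - f (A u) := by
    simp only [sub_eq_add_neg]
    exact (hf.translate_right (A u)).add_const (-f (A u))
  have le_increment : ∀ x : A.linear.range, L₀ x ≤ f (A u + x) - f (A u) := by
    rintro ⟨_, v, rfl⟩
    have h := hL (v + u)
    rw [Function.comp_apply, Function.comp_apply, ← vadd_eq_add v, A.map_vadd, vadd_eq_add,
      vadd_eq_add, add_sub_cancel_right, add_comm _ (A u)] at h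
    exact le_sub_iff_add_le'.2 h
  obtain ⟨L', L'_eq, L'_le⟩ :=
    exists_extension_of_le_convexOn convex_increment (L₀.toPMap A.linear.range) le_increment
  refine ⟨L', fun y => ?_, LinearMap.ext fun v => L'_eq ⟨A.linear v, v, rfl⟩⟩
  simpa [le_sub_iff_add_le'] using L'_le (y - A u)

theorem subdifferential_nonempty {f : E → ℝ} (hf : ConvexOn ℝ Set.univ f) (u : E) :
    (subdifferential f u).Nonempty := by
  have zero_mem : 0 ∈ subdifferential (f ∘ AffineMap.const ℝ E u) u := fun x => by simp
  rw [subdifferential_comp_affineMap hf] at zero_mem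
  exact Set.image_nonempty.1 ⟨0, zero_mem⟩

end Subdifferential

section Coordinates

variable {ι : Type*} [DecidableEq ι]

/-- The affine map `y ↦ ι_N(y, c_C)`, where `C` is the complement of `N`: the coordinates in `N` are
those of `y`, the others are those of `c`. -/
def insertCoords {R : Type*} [Ring R] (N : Finset ι) (c : ι → R) :
    ({i // i ∈ N} → R) →ᵃ[R] (ι → R) where
  toFun y j := if hj : j ∈ N then y ⟨j, hj⟩ else c j
  linear :=
    { toFun y j := if hj : j ∈ N then y ⟨j, hj⟩ else 0
      map_add' x y := by ext j; by_cases hj : j ∈ N <;> simp [hj]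
      map_smul' a y := by ext j; by_cases hj : j ∈ N <;> simp [hj] }
  map_vadd' y v := by ext j; by_cases hj : j ∈ N <;> simp [hj]

theorem insertCoords_self {R : Type*} [Ring R] (N : Finset ι) (u : ι → R) :
    insertCoords N u (fun i => u i) = u :=
  funext fun _ => dite_eq_ite.trans (ite_self _)

variable [Fintype ι]

theorem dotProduct_insertCoords_linear {R : Type*} [Ring R] (N : Finset ι) (c v : ι → R)
    (y : {i // i ∈ N} → R) :
    v ⬝ᵥ (insertCoords N c).linear y = (fun i : {i // i ∈ N} => v i) ⬝ᵥ y := by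
  have linear_apply : ∀ j, (insertCoords N c).linear y j = if hj : j ∈ N then y ⟨j, hj⟩ else 0 :=
    fun _ => rfl
  calc ∑ j, v j * (insertCoords N c).linear y j
      = ∑ j ∈ N, v j * (insertCoords N c).linear y j :=
        (Finset.sum_subset N.subset_univ fun j _ hj => by simp [linear_apply, hj]).symm
    _ = ∑ i : {i // i ∈ N}, v i * (insertCoords N c).linear y i :=
        (Finset.sum_coe_sort N _).symm
    _ = ∑ i : {i // i ∈ N}, v i * y i := by simp [linear_apply]

theorem dualMap_insertCoords_dotProductEquiv {R : Type*} [CommRing R] (N : Finset ι)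
    (c v : ι → R) :
    (insertCoords N c).linear.dualMap (dotProductEquiv R ι v) =
      dotProductEquiv R {i // i ∈ N} fun i => v i :=
  LinearMap.ext fun y => dotProduct_insertCoords_linear N c v y

theorem mem_subdiffG_iff {g : (ι → ℝ) → (ι → ℝ)} {u : ι → ℝ} {M : Matrix ι ι ℝ} :
    M ∈ SubdiffG g u ↔ ∀ i, dotProductEquiv ℝ ι (M i) ∈ subdifferential (fun x => g x i) u :=
  forall_comm

theorem mem_subdifferential_comp_insertCoords_iff {f : (ι → ℝ) → ℝ}
    (hf : ConvexOn ℝ Set.univ f) {u : ι → ℝ} {N : Finset ι} {q : {i // i ∈ N} → ℝ} :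
    dotProductEquiv ℝ {i // i ∈ N} q ∈ subdifferential (f ∘ insertCoords N u) (fun i => u i) ↔
      ∃ v, dotProductEquiv ℝ ι v ∈ subdifferential f u ∧ (fun i : {i // i ∈ N} => v i) = q := by
  rw [subdifferential_comp_affineMap hf, insertCoords_self, Set.mem_image,
    (dotProductEquiv ℝ ι).surjective.exists]
  simp only [dualMap_insertCoords_dotProductEquiv, EmbeddingLike.apply_eq_iff_eq]

theorem subdiff_restriction_general (g : (ι → ℝ) → (ι → ℝ))
    (hconv : ∀ i, ConvexOn ℝ Set.univ fun x => g x i) (u : ι → ℝ) (N : Finset ι) :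
    SubdiffG (fun y (i : {i // i ∈ N}) => g (insertCoords N u y) i) (fun i => u i) =
      {Q : Matrix {i // i ∈ N} {i // i ∈ N} ℝ | ∃ M ∈ SubdiffG g u, Q = fun i j => M i.1 j.1} := by
  ext Q
  have mem_iff :
      Q ∈ SubdiffG (fun y (i : {i // i ∈ N}) => g (insertCoords N u y) i) (fun i => u i) ↔
      ∀ i : {i // i ∈ N}, ∃ v, dotProductEquiv ℝ ι v ∈ subdifferential (fun x => g x i) u ∧
        (fun j : {j // j ∈ N} => v j) = Q i :=
    mem_subdiffG_iff.trans <|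
      forall_congr' fun i => mem_subdifferential_comp_insertCoords_iff (hconv i)
  rw [mem_iff]
  constructor
  · intro hQ
    have exists_row : ∀ i, ∃ v, dotProductEquiv ℝ ι v ∈ subdifferential (fun x => g x i) u ∧
        ∀ hi : i ∈ N, (fun j : {j // j ∈ N} => v j) = Q ⟨i, hi⟩ := fun i => by
      by_cases hi : i ∈ N
      · exact (hQ ⟨i, hi⟩).imp fun v hv => ⟨hv.1, fun _ => hv.2⟩
      · obtain ⟨L, hL⟩ := subdifferential_nonempty (hconv i) u
        obtain ⟨v, rfl⟩ := (dotProductEquiv ℝ ι).surjective L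
        exact ⟨v, hL, fun h => absurd h hi⟩
    choose M hM hMQ using exists_row
    exact ⟨M, mem_subdiffG_iff.2 hM, funext fun i => (hMQ i i.2).symm⟩
  · rintro ⟨M, hM, rfl⟩ i
    exact ⟨M i, mem_subdiffG_iff.1 hM i, rfl⟩

end Coordinates

/-- Let `g : ℝⁿ → ℝⁿ` have convex (finite-valued) coordinates, let
`u ∈ ℝⁿ`, let `N ⊆ {1,…,n}` with complement `C`, and define `h : ℝ^N → ℝ^N` by
`h(y) = r_N (g (ι_N(y, u_C)))`.  Then `∂h(u_N) = { M_{NN} : M ∈ ∂g(u) }`. -/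
theorem subdiff_restriction
    (n : ℕ) (g : (Fin n → ℝ) → (Fin n → ℝ))
    (hconv : ∀ i, ConvexOn ℝ Set.univ (fun x => g x i))
    (u : Fin n → ℝ) (N : Finset (Fin n)) :
    SubdiffG
        (fun (y : {i : Fin n // i ∈ N} → ℝ) (i : {i : Fin n // i ∈ N}) =>
          g (fun j => if hj : j ∈ N then y ⟨j, hj⟩ else u j) i.1)
        (fun i : {i : Fin n // i ∈ N} => u i.1)
      = {Q : Matrix {i : Fin n // i ∈ N} {i : Fin n // i ∈ N} ℝ |
          ∃ M ∈ SubdiffG g u, Q = fun i j => M i.1 j.1} := by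
  exact subdiff_restriction_general g hconv u N
end

section
/- Let g : ℝⁿ → ℝⁿ be order-preserving, nonexpansive in the sup-norm, and possess a cycle time χ(g) = lim_{k→∞} g^k(y)/k (independent of y). If t ↦ tη + v is a super-invariant half-line of g, meaning g(tη + v) ≤ (t+1)η + v for all sufficiently large t, then χ(g) ≤ η. -/
open Filter Topology

/-!
By monotonicity, an orbit starting below the half-line at time `T` stays below it: after `k` steps
it lies below the point at time `T + k`, which is `k • η` plus a constant. Dividing by `k` and
letting `k → ∞` bounds the cycle time by `η`.
-/

theorem iterate_le_of_superinvariant {α : Type*} [Preorder α] {g : α → α} (hg : Monotone g)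
    {w : ℝ → α} {T : ℝ} (hw : ∀ t ≥ T, g (w t) ≤ w (t + 1)) {y : α} (hy : y ≤ w T) (k : ℕ) :
    g^[k] y ≤ w (T + k) := by
  refine hg.seq_le_seq (x := fun k => g^[k] y) (y := fun k : ℕ => w (T + k)) k (by simpa using hy)
    (fun j _ => (Function.iterate_succ_apply' g j y).le) fun j _ => ?_
  simpa only [Nat.cast_succ, add_assoc] using
    hw (T + j) (le_add_of_nonneg_right j.cast_nonneg)

section HalfLine

variable {E : Type*} [AddCommGroup E] [Module ℝ E]

/-- The half-line `t ↦ tη + v` with slope `η`, used to bound the growth of orbits. It is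
defined for every real `t`; what is required only for large `t` is stated for `t ≥ T`. -/
def halfLine (η v : E) (t : ℝ) : E :=
  t • η + v

theorem halfLine_add (η v : E) (s t : ℝ) :
    halfLine η v (s + t) = t • η + halfLine η v s := by
  simp only [halfLine]
  module

variable [TopologicalSpace E] [ContinuousAdd E] [ContinuousSMul ℝ E]

theorem tendsto_inv_smul_halfLine_add (η v : E) (T : ℝ) :
    Tendsto (fun k : ℕ => (k : ℝ)⁻¹ • halfLine η v (T + k)) atTop (𝓝 η) := by
  have hlim : Tendsto (fun k : ℕ => η + (k : ℝ)⁻¹ • halfLine η v T) atTop (𝓝 η) := by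
    simpa only [zero_smul, add_zero] using
      (tendsto_inv_atTop_nhds_zero_nat (𝕜 := ℝ)).smul_const (halfLine η v T) |>.const_add η
  refine hlim.congr' ?_
  filter_upwards [eventually_ne_atTop 0] with k hk
  rw [halfLine_add, smul_add, inv_smul_smul₀ (Nat.cast_ne_zero.2 hk)]

theorem cycleTime_le_slope_of_superinvariant_general [Preorder E] [PosSMulMono ℝ E]
    [OrderClosedTopology E] {g : E → E} (hg : Monotone g) {η v : E} {T : ℝ}
    (hw : ∀ t ≥ T, g (halfLine η v t) ≤ halfLine η v (t + 1)) {y χ : E}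
    (hy : y ≤ halfLine η v T)
    (hχ : Tendsto (fun k : ℕ => (k : ℝ)⁻¹ • g^[k] y) atTop (𝓝 χ)) :
    χ ≤ η :=
  le_of_tendsto_of_tendsto' hχ (tendsto_inv_smul_halfLine_add η v T) fun k =>
    smul_le_smul_of_nonneg_left (iterate_le_of_superinvariant hg hw hy k)
      (inv_nonneg.2 k.cast_nonneg)

end HalfLine

/-- Let `g : ℝⁿ → ℝⁿ` be order-preserving, nonexpansive in the
sup-norm (the distance on `Fin n → ℝ` is the sup-distance), and possess a cycle time
`χ(g) = lim_{k→∞} g^k(y)/k` (independent of `y`).  If `t ↦ tη + v` is a super-invariant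
half-line of `g`, i.e. `g(tη + v) ≤ (t+1)η + v` for all sufficiently large `t`, then
`χ(g) ≤ η`. -/
theorem cycleTime_le_slope_of_superinvariant
    (n : ℕ) (g : (Fin n → ℝ) → (Fin n → ℝ))
    (hop : ∀ x y : Fin n → ℝ, x ≤ y → g x ≤ g y)
    (hne : ∀ x y : Fin n → ℝ, dist (g x) (g y) ≤ dist x y)
    (χ : Fin n → ℝ)
    (hχ : ∀ y : Fin n → ℝ,
      Tendsto (fun k : ℕ => fun i => g^[k] y i / k) atTop (𝓝 χ))
    (η v : Fin n → ℝ) (T : ℝ)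
    (hsup : ∀ t ≥ T, g (fun i => t * η i + v i) ≤ fun i => (t + 1) * η i + v i) :
    χ ≤ η := by
  exact cycleTime_le_slope_of_superinvariant_general hop hsup le_rfl
    (by simpa only [Pi.smul_def, smul_eq_mul, div_eq_inv_mul] using hχ (halfLine η v T))
end
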